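/- arXiv:2001.08813 — 8 statements merged into one kernel-verified Lean document; each statement's English description precedes it below -/
import Mathlib

section
/- Assume additionally that each β_z is twice continuously differentiable on (0,∞) with β_z'' > 0 everywhere on (0,∞). Then Λ and Υ are differentiable on ℝ^d, the partial derivatives of Υ are ∂Υ/∂θ_i(θ) = Σ_{z∈Z} P_θ(z) f_i(z) = μ(P_θ)_i for all i and all θ ∈ ℝ^d, and Υ is a convex function on ℝ^d. -/
theorem stmt_3 {Z : Type} [Fintype Z] [Nonempty Z] {d : ℕ}
    (β β' : Z → ℝ → ℝ)
    (hβc : ∀ z, ContinuousOn (β z) (Set.Ici 0))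
    (hβsc : ∀ z, StrictConvexOn ℝ (Set.Ioi 0) (β z))
    (hβd : ∀ z x, 0 < x → HasDerivAt (β z) (β' z x) x)
    (hβ'bot : ∀ z, Filter.Tendsto (β' z) (nhdsWithin 0 (Set.Ioi 0)) Filter.atBot)
    (hβ'top : ∀ z, Filter.Tendsto (β' z) Filter.atTop Filter.atTop)
    (e : Z → ℝ → ℝ)
    (he_pos : ∀ z r, 0 < e z r)
    (he_left : ∀ z r, β' z (e z r) = r)
    (he_right : ∀ z x, 0 < x → e z (β' z x) = x)
    (β'' : Z → ℝ → ℝ)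
    (hβd2 : ∀ z x, 0 < x → HasDerivAt (β' z) (β'' z x) x)
    (hβ''c : ∀ z, ContinuousOn (β'' z) (Set.Ioi 0))
    (hβ''pos : ∀ z x, 0 < x → 0 < β'' z x)
    (f : Z → Fin d → ℝ)
    (prob : Set (Z → ℝ))
    (hprob : prob = {P : Z → ℝ | (∀ z, 0 ≤ P z) ∧ (∑ z, P z) = 1})
    (μ : (Z → ℝ) → Fin d → ℝ)
    (hμ : ∀ P i, μ P i = ∑ z, P z * f z i)
    (H : (Z → ℝ) → ℝ)
    (hH : ∀ Q, H Q = ∑ z, β z (Q z))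
    (Λ : (Fin d → ℝ) → ℝ)
    (hΛ : ∀ θ, (∑ z, e z ((∑ i, θ i * f z i) - Λ θ)) = 1)
    (Pθ : (Fin d → ℝ) → Z → ℝ)
    (hPθ : ∀ θ z, Pθ θ z = e z ((∑ i, θ i * f z i) - Λ θ))
    (βstar : Z → ℝ → ℝ)
    (hβstar : ∀ z t, βstar z t = sSup ((fun x => t * x - β z x) '' Set.Ioi 0))
    (Υ : (Fin d → ℝ) → ℝ)
    (hΥ : ∀ θ, Υ θ = Λ θ + ∑ z, βstar z ((∑ i, θ i * f z i) - Λ θ)) :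
    Differentiable ℝ Λ ∧ Differentiable ℝ Υ ∧
    (∀ θ : Fin d → ℝ, ∀ i : Fin d, fderiv ℝ Υ θ (Pi.single i 1) = ∑ z, Pθ θ z * f z i) ∧
    ConvexOn ℝ Set.univ Υ := by
  classical
  have hmono : ∀ z, StrictMonoOn (β' z) (Set.Ioi 0) := by
    intro z
    apply strictMonoOn_of_deriv_pos (convex_Ioi 0)
    · exact fun x hx => (hβd2 z x hx).continuousAt.continuousWithinAt
    · intro x hx
      rw [interior_Ioi] at hx
      rw [(hβd2 z x hx).deriv]
      exact hβ''pos z x hx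
  have hemono : ∀ z, StrictMono (e z) := by
    intro z r s hrs
    by_contra hcon
    push Not at hcon
    have := (hmono z).monotoneOn (he_pos z s) (he_pos z r) hcon
    rw [he_left, he_left] at this
    linarith
  have hecont : ∀ z r, ContinuousAt (e z) r := by
    intro z r
    apply ((hemono z).strictMonoOn Set.univ).continuousAt_of_image_mem_nhds Filter.univ_mem
    refine Filter.mem_of_superset (Ioi_mem_nhds (he_pos z r)) ?_
    intro x hx
    exact ⟨β' z x, trivial, he_right z x hx⟩
  have hed : ∀ z r, HasDerivAt (e z) (β'' z (e z r))⁻¹ r := fun z r =>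
    HasDerivAt.of_local_left_inverse (hecont z r) (hβd2 z _ (he_pos z r))
      (hβ''pos z _ (he_pos z r)).ne' (Filter.Eventually.of_forall (he_left z))
  have heds : ∀ z r, HasStrictDerivAt (e z) (β'' z (e z r))⁻¹ r := by
    intro z r
    refine hasStrictDerivAt_of_hasDerivAt_of_continuousAt
      (f' := fun r => (β'' z (e z r))⁻¹) (Filter.Eventually.of_forall (hed z)) ?_
    refine ContinuousAt.inv₀ ?_ (hβ''pos z _ (he_pos z r)).ne'
    exact ContinuousAt.comp (f := e z) (g := β'' z)
      ((hβ''c z).continuousAt (Ioi_mem_nhds (he_pos z r))) (hecont z r)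
  have htan : ∀ z t x, 0 < x → t * x - β z x ≤ t * e z t - β z (e z t) := by
    intro z t x hx
    have hd := hβd z _ (he_pos z t)
    rw [he_left] at hd
    rcases lt_trichotomy x (e z t) with h | h | h
    · have := (hβsc z).convexOn.slope_le_of_hasDerivAt hx (he_pos z t) h hd
      rw [slope_def_field, div_le_iff₀ (by linarith)] at this
      linarith
    · rw [← h]
    · have := (hβsc z).convexOn.le_slope_of_hasDerivAt (he_pos z t) hx h hd
      rw [slope_def_field, le_div_iff₀ (by linarith)] at this
      linarith
  have hbs : ∀ z t, βstar z t = t * e z t - β z (e z t) := by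
    intro z t
    rw [hβstar]
    apply IsGreatest.csSup_eq
    refine ⟨⟨e z t, he_pos z t, rfl⟩, ?_⟩
    rintro _ ⟨x, hx, rfl⟩
    exact htan z t x hx
  have hbsd : ∀ z t, HasDerivAt (βstar z) (e z t) t := by
    intro z t
    have h1 : HasDerivAt (β z) t (e z t) := by
      have := hβd z _ (he_pos z t)
      rwa [he_left] at this
    have h2 := ((hasDerivAt_id t).mul (hed z t)).sub (h1.comp t (hed z t))
    have h3 : βstar z = id * e z - β z ∘ e z := by
      funext t
      simp [hbs]
    rw [h3]
    refine HasDerivAt.congr_deriv h2 ?_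
    simp
  obtain ⟨T, hT⟩ : ∃ T : Z → ((Fin d → ℝ) →L[ℝ] ℝ), ∀ z θ, T z θ = ∑ i, θ i * f z i :=
    ⟨fun z => ∑ i, f z i • ContinuousLinearMap.proj i, fun z θ => by
      simp [mul_comm]⟩
  simp only [← hT] at hΛ hPθ hΥ
  have huniq : ∀ θ r, (∑ z, e z (T z θ - r)) = 1 → r = Λ θ := by
    intro θ r hr
    rcases lt_trichotomy r (Λ θ) with h | h | h
    · have : (∑ z, e z (T z θ - Λ θ)) < ∑ z, e z (T z θ - r) :=
        Finset.sum_lt_sum_of_nonempty Finset.univ_nonempty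
          fun z _ => hemono z (by linarith)
      rw [hr, hΛ] at this
      exact absurd this (lt_irrefl _)
    · exact h
    · have : (∑ z, e z (T z θ - r)) < ∑ z, e z (T z θ - Λ θ) :=
        Finset.sum_lt_sum_of_nonempty Finset.univ_nonempty
          fun z _ => hemono z (by linarith)
      rw [hr, hΛ] at this
      exact absurd this (lt_irrefl _)
  have hΛd : Differentiable ℝ Λ := by
    intro θ
    let F : (Fin d → ℝ) × ℝ → ℝ := fun v => ∑ z, e z (T z v.1 - v.2)
    let c : Z → ℝ := fun z => (β'' z (e z (T z θ - Λ θ)))⁻¹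
    let F' : (Fin d → ℝ) × ℝ →L[ℝ] ℝ := ∑ z, c z • ((T z).comp
      (ContinuousLinearMap.fst ℝ (Fin d → ℝ) ℝ) - ContinuousLinearMap.snd ℝ (Fin d → ℝ) ℝ)
    have hc : ∀ z, 0 < c z := fun z => inv_pos.2 (hβ''pos z _ (he_pos z _))
    have hF : HasStrictFDerivAt F F' (θ, Λ θ) := by
      apply HasStrictFDerivAt.fun_sum
      intro z _
      exact (heds z (T z θ - Λ θ)).comp_hasStrictFDerivAt (θ, Λ θ)
        (((T z).comp (ContinuousLinearMap.fst ℝ (Fin d → ℝ) ℝ) -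
          ContinuousLinearMap.snd ℝ (Fin d → ℝ) ℝ).hasStrictFDerivAt)
    have hS : 0 < ∑ z, c z := Finset.sum_pos (fun z _ => hc z) Finset.univ_nonempty
    have hinv : (F' ∘L .inr ℝ (Fin d → ℝ) ℝ).IsInvertible := by
      refine ⟨ContinuousLinearEquiv.smulLeft (Units.mk0 (-∑ z, c z) (by linarith)), ?_⟩
      ext
      simp [F', Units.smul_def]
    have hd := (hF.hasStrictFDerivAt_implicitFunctionOfProdDomain hinv).hasFDerivAt.differentiableAt
    refine hd.congr_of_eventuallyEq ?_
    filter_upwards [hF.eventually_apply_implicitFunctionOfProdDomain hinv] with x hx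
    symm
    apply huniq
    have h0 : F (θ, Λ θ) = 1 := hΛ θ
    rw [h0] at hx
    exact hx
  have hΥd : ∀ θ, HasFDerivAt Υ (∑ z, Pθ θ z • T z) θ := by
    intro θ
    have h1 := (hΛd θ).hasFDerivAt
    have h2 : ∀ z ∈ Finset.univ, HasFDerivAt (fun θ => βstar z (T z θ - Λ θ))
        (Pθ θ z • (T z - fderiv ℝ Λ θ)) θ := by
      intro z _
      rw [hPθ]
      exact (hbsd z (T z θ - Λ θ)).comp_hasFDerivAt θ ((T z).hasFDerivAt.sub h1)
    have h3 := h1.add (HasFDerivAt.fun_sum h2)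
    have h4 : Υ = Λ + fun θ => ∑ z, βstar z (T z θ - Λ θ) := by
      funext θ
      simp [hΥ]
    rw [h4]
    refine HasFDerivAt.congr_fderiv h3 ?_
    have h5 : ∑ z, Pθ θ z = 1 := by
      simp only [hPθ]; exact hΛ θ
    simp only [smul_sub, Finset.sum_sub_distrib, ← Finset.sum_smul, h5, one_smul]
    abel
  refine ⟨hΛd, fun θ => (hΥd θ).differentiableAt, ?_, ?_⟩
  · intro θ i
    rw [(hΥd θ).fderiv]
    simp [hT, Pi.single_apply]
  · have hPpos : ∀ θ z, 0 < Pθ θ z := fun θ z => by rw [hPθ]; exact he_pos _ _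
    have hPsum : ∀ θ, ∑ z, Pθ θ z = 1 := fun θ => by simp only [hPθ]; exact hΛ θ
    have hle : ∀ θ (P : Z → ℝ), (∀ z, 0 < P z) → ∑ z, P z = 1 →
        ∑ z, (T z θ * P z - β z (P z)) ≤ Υ θ := by
      intro θ P hP hs
      have h1 : ∑ z, ((T z θ - Λ θ) * P z - β z (P z)) ≤ ∑ z, βstar z (T z θ - Λ θ) :=
        Finset.sum_le_sum fun z _ => by rw [hbs]; exact htan z _ _ (hP z)
      have h2 : ∑ z, (T z θ * P z - β z (P z)) =
          Λ θ * ∑ z, P z + ∑ z, ((T z θ - Λ θ) * P z - β z (P z)) := by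
        rw [Finset.mul_sum, ← Finset.sum_add_distrib]
        exact Finset.sum_congr rfl fun z _ => by ring
      rw [h2, hs, hΥ]
      linarith
    have heq : ∀ θ, Υ θ = ∑ z, (T z θ * Pθ θ z - β z (Pθ θ z)) := by
      intro θ
      have h2 : ∑ z, (T z θ * Pθ θ z - β z (Pθ θ z)) =
          Λ θ * ∑ z, Pθ θ z + ∑ z, ((T z θ - Λ θ) * Pθ θ z - β z (Pθ θ z)) := by
        rw [Finset.mul_sum, ← Finset.sum_add_distrib]
        exact Finset.sum_congr rfl fun z _ => by ring
      rw [h2, hPsum, hΥ, mul_one]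
      simp only [hbs, hPθ]
    refine ⟨convex_univ, ?_⟩
    intro x _ y _ a b ha hb hab
    have hP := hPpos (a • x + b • y)
    have hs := hPsum (a • x + b • y)
    rw [heq (a • x + b • y)]
    generalize Pθ (a • x + b • y) = P at *
    have h1 := mul_le_mul_of_nonneg_left (hle x P hP hs) ha
    have h2 := mul_le_mul_of_nonneg_left (hle y P hP hs) hb
    refine le_trans (le_of_eq ?_) (add_le_add h1 h2)
    rw [Finset.mul_sum, Finset.mul_sum, ← Finset.sum_add_distrib]
    refine Finset.sum_congr rfl fun z _ => ?_
    simp only [map_add, map_smul, smul_eq_mul]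
    linear_combination (β z (P z)) * hab
end

section
/- Let Q ∈ cl(ℰ) (the closure of ℰ in 𝒫(Z)) and let P ∈ 𝒫(Z) satisfy μ(P) = μ(Q). Then Q = Π_P; that is, Q is the unique minimizer of H over {R ∈ 𝒫(Z) : μ(R) = μ(P)}. -/
theorem tangent_aux (b b' : ℝ → ℝ) (hc : ContinuousOn b (Set.Ici 0))
    (hs : StrictConvexOn ℝ (Set.Ioi 0) b)
    (hd : ∀ x, 0 < x → HasDerivAt b (b' x) x) (x y : ℝ) (hx : 0 < x) (hy : 0 ≤ y) :
    b x + b' x * (y - x) ≤ b y := by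
  have key : ∀ y, 0 < y → b x + b' x * (y - x) ≤ b y := by
    intro y hy
    rcases lt_trichotomy x y with h | h | h
    · have := hs.convexOn.le_slope_of_hasDerivAt (x := x) (y := y) hx hy h (hd x hx)
      rw [slope_def_field, le_div_iff₀ (by linarith)] at this
      linarith
    · subst h; simp
    · have := hs.convexOn.slope_le_of_hasDerivAt (x := y) (y := x) hy hx h (hd x hx)
      rw [slope_def_field, div_le_iff₀ (by linarith)] at this
      linarith
  rcases hy.eq_or_lt with h | h
  · subst h
    have h1 : Filter.Tendsto b (nhdsWithin 0 (Set.Ioi 0)) (nhds (b 0)) :=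
      (hc 0 (by simp)).mono_left (nhdsWithin_mono _ Set.Ioi_subset_Ici_self)
    have h2 : Filter.Tendsto (fun y => b x + b' x * (y - x)) (nhdsWithin 0 (Set.Ioi 0))
        (nhds (b x + b' x * (0 - x))) := by
      have : Continuous (fun y => b x + b' x * (y - x)) := by fun_prop
      exact (this.tendsto 0).mono_left nhdsWithin_le_nhds
    refine le_of_tendsto_of_tendsto h2 h1 ?_
    filter_upwards [self_mem_nhdsWithin] with y hy using key y hy
  · exact key y h

theorem lower_aux (b b' : ℝ → ℝ) (hc : ContinuousOn b (Set.Ici 0))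
    (hs : StrictConvexOn ℝ (Set.Ioi 0) b)
    (hd : ∀ x, 0 < x → HasDerivAt b (b' x) x)
    (hbot : Filter.Tendsto b' (nhdsWithin 0 (Set.Ioi 0)) Filter.atBot)
    (q : ℕ → ℝ) (Q : ℝ) (hq : ∀ n, 0 < q n) (hQ : 0 ≤ Q)
    (hlim : Filter.Tendsto q Filter.atTop (nhds Q)) :
    ∃ c : ℕ → ℝ, Filter.Tendsto c Filter.atTop (nhds 0) ∧
      ∀ᶠ n in Filter.atTop, c n ≤ b' (q n) * (Q - q n) := by
  rcases hQ.eq_or_lt with h | h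
  · subst h
    refine ⟨fun _ => 0, tendsto_const_nhds, ?_⟩
    have h1 : Filter.Tendsto q Filter.atTop (nhdsWithin 0 (Set.Ioi 0)) :=
      tendsto_nhdsWithin_iff.2 ⟨hlim, Filter.Eventually.of_forall hq⟩
    filter_upwards [(hbot.comp h1).eventually_le_atBot 0] with n hn
    have := hq n
    simp only [Function.comp] at hn
    nlinarith
  · have hl2 : Filter.Tendsto (fun n => 2 * q n - Q) Filter.atTop (nhds Q) := by
      have := (hlim.const_mul 2).sub_const Q
      convert this using 2
      ring
    have hcQ : ContinuousAt b Q := (hd Q h).continuousAt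
    refine ⟨fun n => b (q n) - b (2 * q n - Q), ?_, ?_⟩
    · have := (hcQ.tendsto.comp hlim).sub (hcQ.tendsto.comp hl2)
      simpa using this
    · filter_upwards [hl2.eventually_const_lt h] with n hn
      have := tangent_aux b b' hc hs hd (q n) (2 * q n - Q) (hq n) hn.le
      linarith

theorem stmt_6 {Z : Type} [Fintype Z] [Nonempty Z] {d : ℕ}
    (β β' : Z → ℝ → ℝ)
    (hβc : ∀ z, ContinuousOn (β z) (Set.Ici 0))
    (hβsc : ∀ z, StrictConvexOn ℝ (Set.Ioi 0) (β z))
    (hβd : ∀ z x, 0 < x → HasDerivAt (β z) (β' z x) x)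
    (hβ'bot : ∀ z, Filter.Tendsto (β' z) (nhdsWithin 0 (Set.Ioi 0)) Filter.atBot)
    (hβ'top : ∀ z, Filter.Tendsto (β' z) Filter.atTop Filter.atTop)
    (e : Z → ℝ → ℝ)
    (he_pos : ∀ z r, 0 < e z r)
    (he_left : ∀ z r, β' z (e z r) = r)
    (he_right : ∀ z x, 0 < x → e z (β' z x) = x)
    (f : Z → Fin d → ℝ)
    (prob : Set (Z → ℝ))
    (hprob : prob = {P : Z → ℝ | (∀ z, 0 ≤ P z) ∧ (∑ z, P z) = 1})
    (μ : (Z → ℝ) → Fin d → ℝ)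
    (hμ : ∀ P i, μ P i = ∑ z, P z * f z i)
    (H : (Z → ℝ) → ℝ)
    (hH : ∀ Q, H Q = ∑ z, β z (Q z))
    (Λ : (Fin d → ℝ) → ℝ)
    (hΛ : ∀ θ, (∑ z, e z ((∑ i, θ i * f z i) - Λ θ)) = 1)
    (Pθ : (Fin d → ℝ) → Z → ℝ)
    (hPθ : ∀ θ z, Pθ θ z = e z ((∑ i, θ i * f z i) - Λ θ))
    (Pr : (Z → ℝ) → Z → ℝ)
    (hPr : ∀ P ∈ prob, Pr P ∈ prob ∧ μ (Pr P) = μ P ∧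
      (∀ Q ∈ prob, μ Q = μ P → H (Pr P) ≤ H Q) ∧
      (∀ Q ∈ prob, μ Q = μ P → H Q = H (Pr P) → Q = Pr P)) :
    ∀ Q ∈ closure {R : Z → ℝ | ∃ θ : Fin d → ℝ, R = Pθ θ},
      ∀ P ∈ prob, μ P = μ Q → Q = Pr P := by
  intro Q hQ P hP hPQ
  obtain ⟨q, hqm, hlim⟩ := mem_closure_iff_seq_limit.1 hQ
  choose θ hθ using hqm
  have hpt : ∀ z, Filter.Tendsto (fun n => q n z) Filter.atTop (nhds (Q z)) :=
    fun z => (tendsto_pi_nhds.1 hlim) z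
  have hqe : ∀ n z, q n z = e z ((∑ i, θ n i * f z i) - Λ (θ n)) := by
    intro n z; rw [hθ, hPθ]
  have hqpos : ∀ n z, 0 < q n z := fun n z => by rw [hqe]; exact he_pos _ _
  have hqsum : ∀ n, ∑ z, q n z = 1 := fun n => by simp_rw [hqe]; exact hΛ _
  have hQ0 : ∀ z, 0 ≤ Q z := fun z => ge_of_tendsto' (hpt z) (fun n => (hqpos n z).le)
  have hQ1 : ∑ z, Q z = 1 := by
    have h1 : Filter.Tendsto (fun n => ∑ z, q n z) Filter.atTop (nhds (∑ z, Q z)) :=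
      tendsto_finsetSum _ (fun z _ => hpt z)
    simp_rw [hqsum] at h1
    exact (tendsto_nhds_unique h1 tendsto_const_nhds)
  have hQp : Q ∈ prob := by rw [hprob]; exact ⟨hQ0, hQ1⟩
  obtain ⟨hR, hRμ, hmin, huniq⟩ := hPr P hP
  refine huniq Q hQp hPQ.symm (le_antisymm ?_ (hmin Q hQp hPQ.symm))
  generalize Pr P = R at hR hRμ
  have hR' := hR
  rw [hprob] at hR'
  obtain ⟨hR0, hR1⟩ := hR'
  have hRQ : ∀ i, ∑ z, R z * f z i = ∑ z, Q z * f z i := by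
    intro i; rw [← hμ, ← hμ, hRμ, hPQ]
  have hlin : ∀ n, ∑ z, β' z (q n z) * (R z - q n z) = ∑ z, β' z (q n z) * (Q z - q n z) := by
    intro n
    rw [← sub_eq_zero, ← Finset.sum_sub_distrib]
    have h1 : ∀ z, β' z (q n z) = (∑ i, θ n i * f z i) - Λ (θ n) := by
      intro z; rw [hqe, he_left]
    have h2 : ∀ z, β' z (q n z) * (R z - q n z) - β' z (q n z) * (Q z - q n z)
        = (∑ i, θ n i * (R z * f z i - Q z * f z i)) - Λ (θ n) * (R z - Q z) := by
      intro z
      have h3 : ∑ i, θ n i * (R z * f z i - Q z * f z i)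
          = (∑ i, θ n i * f z i) * (R z - Q z) := by
        rw [Finset.sum_mul]
        exact Finset.sum_congr rfl (fun i _ => by ring)
      rw [h3, h1]; ring
    simp_rw [h2]
    rw [Finset.sum_sub_distrib, Finset.sum_comm, ← Finset.mul_sum, Finset.sum_sub_distrib, hR1, hQ1]
    simp_rw [← Finset.mul_sum, Finset.sum_sub_distrib, hRQ]
    simp
  choose c hc0 hcle using fun z => lower_aux (β z) (β' z) (hβc z) (hβsc z) (hβd z) (hβ'bot z)
    (fun n => q n z) (Q z) (fun n => hqpos n z) (hQ0 z) (hpt z)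
  have hHlim : Filter.Tendsto (fun n => ∑ z, (β z (q n z) + c z n)) Filter.atTop (nhds (H Q)) := by
    rw [hH]
    refine tendsto_finsetSum _ (fun z _ => ?_)
    have h1 : Filter.Tendsto (fun n => q n z) Filter.atTop (nhdsWithin (Q z) (Set.Ici 0)) :=
      tendsto_nhdsWithin_iff.2 ⟨hpt z, Filter.Eventually.of_forall (fun n => (hqpos n z).le)⟩
    have h2 := ((hβc z (Q z) (hQ0 z)).tendsto.comp h1).add (hc0 z)
    simpa using h2
  refine le_of_tendsto hHlim ?_
  filter_upwards [Filter.eventually_all.2 hcle] with n hn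
  rw [hH]
  calc ∑ z, (β z (q n z) + c z n) ≤ ∑ z, (β z (q n z) + β' z (q n z) * (Q z - q n z)) :=
        Finset.sum_le_sum (fun z _ => by linarith [hn z])
    _ = ∑ z, (β z (q n z) + β' z (q n z) * (R z - q n z)) := by
        rw [Finset.sum_add_distrib, Finset.sum_add_distrib, hlin]
    _ ≤ ∑ z, β z (R z) := Finset.sum_le_sum (fun z _ =>
        tangent_aux (β z) (β' z) (hβc z) (hβsc z) (hβd z) _ _ (hqpos n z) (hR0 z))
end

section
/- For every P ∈ 𝒫(Z), B(P,ℰ) = H(P) − H(Π_P). -/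
open Filter Topology Pointwise in
lemma convexOn_Ici_aux {g : ℝ → ℝ} (hc : ContinuousOn g (Set.Ici 0))
    (hs : ConvexOn ℝ (Set.Ioi 0) g) : ConvexOn ℝ (Set.Ici 0) g := by
  refine ⟨convex_Ici 0, ?_⟩
  intro x hx y hy a b ha hb hab
  have hx0 : 0 ≤ x := hx
  have hy0 : 0 ≤ y := hy
  have key : ∀ w : ℝ, 0 ≤ w → Tendsto (fun t : ℝ => g (w + t)) (𝓝[>] 0) (𝓝 (g w)) := by
    intro w hw
    have h1 := hc w hw
    refine Tendsto.comp h1 ?_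
    refine tendsto_nhdsWithin_iff.2 ⟨?_, ?_⟩
    · have : Tendsto (fun t : ℝ => w + t) (𝓝 0) (𝓝 (w + 0)) :=
        (continuous_const.add continuous_id).tendsto 0
      rw [add_zero] at this
      exact this.mono_left nhdsWithin_le_nhds
    · filter_upwards [self_mem_nhdsWithin] with t ht
      have : (0 : ℝ) < t := ht
      show 0 ≤ w + t
      linarith
  have hz : 0 ≤ a * x + b * y := by positivity
  refine le_of_tendsto_of_tendsto (key _ hz)
    (((key x hx0).const_mul a).add ((key y hy0).const_mul b)) ?_
  filter_upwards [self_mem_nhdsWithin] with t ht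
  have ht0 : (0 : ℝ) < t := ht
  have := hs.2 (x := x + t) (y := y + t) (by show 0 < x + t; linarith)
    (by show 0 < y + t; linarith) ha hb hab
  simp only [smul_eq_mul] at this
  have e1 : a * x + b * y + t = a * (x + t) + b * (y + t) := by
    have : t = (a + b) * t := by rw [hab, one_mul]
    linear_combination this
  simp only [smul_eq_mul]
  rw [e1]
  exact this

lemma tangent_aux_s7 {g : ℝ → ℝ} (hg : ConvexOn ℝ (Set.Ici 0) g) {p q g' : ℝ}
    (hp : 0 ≤ p) (hq : 0 < q) (hd : HasDerivAt g g' q) :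
    0 ≤ g p - g q - g' * (p - q) := by
  rcases lt_trichotomy p q with h | h | h
  · have := hg.slope_le_of_hasDerivAt (x := p) (y := q) hp hq.le h hd
    rw [slope_def_field, div_le_iff₀ (by linarith)] at this
    linarith
  · subst h; simp
  · have := hg.le_slope_of_hasDerivAt (x := q) (y := p) hq.le hp h hd
    rw [slope_def_field, le_div_iff₀ (by linarith)] at this
    linarith

open Pointwise in
lemma sep_aux {Z : Type} [Fintype Z] {d : ℕ} (S : Set (Z → ℝ)) (hS : IsCompact S)
    (H : (Z → ℝ) → ℝ) (hH : ConvexOn ℝ S H) (hHc : ContinuousOn H S)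
    (T : (Z → ℝ) →ₗ[ℝ] (Fin d → ℝ)) (R : Z → ℝ) (hR : R ∈ S)
    (hmin : ∀ Q ∈ S, T Q = T R → H R ≤ H Q) (ε : ℝ) (hε : 0 < ε) :
    ∃ θ : Fin d → ℝ, ∀ Q ∈ S,
      H R - ε - ∑ i, θ i * T R i < H Q - ∑ i, θ i * T Q i := by
  set K : Set ((Fin d → ℝ) × ℝ) := {x | ∃ Q ∈ S, T Q = x.1 ∧ H Q ≤ x.2} with hK
  have hTc : Continuous T := T.continuous_of_finiteDimensional
  have hKc : IsClosed K := by
    have h1 : IsCompact ((fun Q => (T Q, H Q)) '' S) :=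
      hS.image_of_continuousOn (hTc.continuousOn.prodMk hHc)
    have h2 : IsClosed (({0} : Set (Fin d → ℝ)) ×ˢ Set.Ici (0 : ℝ)) :=
      isClosed_singleton.prod isClosed_Ici
    have h3 := h2.add_left_of_isCompact h1
    convert h3 using 1
    ext x
    rw [Set.mem_add]
    constructor
    · rintro ⟨Q, hQ, h, h'⟩
      refine ⟨_, ⟨Q, hQ, rfl⟩, (0, x.2 - H Q), ⟨rfl, ?_⟩, ?_⟩
      · show 0 ≤ x.2 - H Q
        linarith
      · ext1 <;> simp [h]
    · rintro ⟨_, ⟨Q, hQ, rfl⟩, y, ⟨hy1, hy2⟩, rfl⟩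
      have hy1' : y.1 = 0 := hy1
      have hy2' : 0 ≤ y.2 := hy2
      refine ⟨Q, hQ, ?_, ?_⟩
      · simp [hy1']
      · simpa using hy2'
  have hKv : Convex ℝ K := by
    rintro x ⟨Q, hQ, h, h'⟩ y ⟨Q', hQ', k, k'⟩ a b ha hb hab
    refine ⟨a • Q + b • Q', hH.1 hQ hQ' ha hb hab, ?_, ?_⟩
    · simp [h, k]
    · refine (hH.2 hQ hQ' ha hb hab).trans ?_
      simp only [smul_eq_mul, Prod.snd_add, Prod.smul_snd]
      gcongr
  have hnot : (T R, H R - ε) ∉ K := by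
    rintro ⟨Q, hQ, h, h'⟩
    have := hmin Q hQ h
    simp only at h'
    linarith
  obtain ⟨φ, u, hu, hφ⟩ := geometric_hahn_banach_point_closed hKv hKc hnot
  set b := φ (0, 1) with hb
  have dec : ∀ (m : Fin d → ℝ) (t : ℝ),
      φ (m, t) = ∑ i, m i * φ (Pi.single i 1, 0) + t * b := by
    intro m t
    have e1 : ((m, t) : (Fin d → ℝ) × ℝ)
        = (∑ i, m i • ((Pi.single i 1, 0) : (Fin d → ℝ) × ℝ)) + t • ((0, 1) : (Fin d → ℝ) × ℝ) := by
      ext1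
      · simp only [Prod.fst_add, Prod.fst_sum, Prod.smul_fst, smul_zero, add_zero]
        exact pi_eq_sum_univ' m
      · simp [Prod.snd_sum]
    rw [e1, map_add, map_sum, map_smul]
    simp only [map_smul, smul_eq_mul, hb]
  have hRK := hφ (T R, H R) ⟨R, hR, rfl, le_rfl⟩
  have hbpos : 0 < b := by
    have := hu.trans hRK
    rw [dec, dec] at this
    have : 0 < ε * b := by linarith
    exact pos_of_mul_pos_right this hε.le
  refine ⟨fun i => -(φ (Pi.single i 1, 0) / b), fun Q hQ => ?_⟩
  have h := hu.trans (hφ (T Q, H Q) ⟨Q, hQ, rfl, le_rfl⟩)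
  rw [dec, dec] at h
  have conv : ∀ m : Fin d → ℝ, ∑ i, -(φ (Pi.single i 1, 0) / b) * m i
      = -((∑ i, m i * φ (Pi.single i 1, 0)) / b) := by
    intro m
    rw [Finset.sum_div, ← Finset.sum_neg_distrib]
    refine Finset.sum_congr rfl fun i _ => ?_
    ring
  simp only [conv]
  have h5 := div_lt_div_of_pos_right h hbpos
  rw [add_div, add_div, mul_div_cancel_right₀ _ hbpos.ne', mul_div_cancel_right₀ _ hbpos.ne'] at h5
  linarith

theorem stmt_7 {Z : Type} [Fintype Z] [Nonempty Z] {d : ℕ}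
    (β β' : Z → ℝ → ℝ)
    (hβc : ∀ z, ContinuousOn (β z) (Set.Ici 0))
    (hβsc : ∀ z, StrictConvexOn ℝ (Set.Ioi 0) (β z))
    (hβd : ∀ z x, 0 < x → HasDerivAt (β z) (β' z x) x)
    (hβ'bot : ∀ z, Filter.Tendsto (β' z) (nhdsWithin 0 (Set.Ioi 0)) Filter.atBot)
    (hβ'top : ∀ z, Filter.Tendsto (β' z) Filter.atTop Filter.atTop)
    (e : Z → ℝ → ℝ)
    (he_pos : ∀ z r, 0 < e z r)
    (he_left : ∀ z r, β' z (e z r) = r)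
    (he_right : ∀ z x, 0 < x → e z (β' z x) = x)
    (f : Z → Fin d → ℝ)
    (prob : Set (Z → ℝ))
    (hprob : prob = {P : Z → ℝ | (∀ z, 0 ≤ P z) ∧ (∑ z, P z) = 1})
    (μ : (Z → ℝ) → Fin d → ℝ)
    (hμ : ∀ P i, μ P i = ∑ z, P z * f z i)
    (H : (Z → ℝ) → ℝ)
    (hH : ∀ Q, H Q = ∑ z, β z (Q z))
    (Λ : (Fin d → ℝ) → ℝ)
    (hΛ : ∀ θ, (∑ z, e z ((∑ i, θ i * f z i) - Λ θ)) = 1)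
    (Pθ : (Fin d → ℝ) → Z → ℝ)
    (hPθ : ∀ θ z, Pθ θ z = e z ((∑ i, θ i * f z i) - Λ θ))
    (Bdiv : (Z → ℝ) → (Z → ℝ) → ℝ)
    (hBdiv : ∀ P Q, Bdiv P Q = ∑ z, (β z (P z) - β z (Q z) - β' z (Q z) * (P z - Q z)))
    (BE : (Z → ℝ) → ℝ)
    (hBE : ∀ P, BE P = ⨅ θ, Bdiv P (Pθ θ))
    (Pr : (Z → ℝ) → Z → ℝ)
    (hPr : ∀ P ∈ prob, Pr P ∈ prob ∧ μ (Pr P) = μ P ∧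
      (∀ Q ∈ prob, μ Q = μ P → H (Pr P) ≤ H Q) ∧
      (∀ Q ∈ prob, μ Q = μ P → H Q = H (Pr P) → Q = Pr P)) :
    ∀ P ∈ prob, BE P = H P - H (Pr P) := by
  intro P hP
  obtain ⟨hRp, hRμ, hmin, -⟩ := hPr P hP
  have hprob' : prob = stdSimplex ℝ Z := hprob
  have hcv : ∀ z, ConvexOn ℝ (Set.Ici 0) (β z) := fun z =>
    convexOn_Ici_aux (hβc z) (hβsc z).convexOn
  have hnn : ∀ Q ∈ prob, ∀ z, 0 ≤ Q z := fun Q hQ => by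
    rw [hprob] at hQ; exact hQ.1
  have hone : ∀ Q ∈ prob, ∑ z, Q z = 1 := fun Q hQ => by
    rw [hprob] at hQ; exact hQ.2
  have hPθp : ∀ θ, Pθ θ ∈ prob := fun θ => by
    rw [hprob]
    refine ⟨fun z => ?_, ?_⟩
    · rw [hPθ]; exact (he_pos _ _).le
    · simp only [hPθ]; exact hΛ θ
  -- formula for the divergence
  have hB : ∀ Q ∈ prob, ∀ θ, Bdiv Q (Pθ θ)
      = H Q - H (Pθ θ) - (∑ i, θ i * μ Q i - ∑ i, θ i * μ (Pθ θ) i) := by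
    intro Q hQ θ
    have hlin : ∀ Q' : Z → ℝ, ∑ i, θ i * μ Q' i = ∑ z, (∑ i, θ i * f z i) * Q' z := by
      intro Q'
      simp only [hμ, Finset.mul_sum, Finset.sum_mul]
      rw [Finset.sum_comm]
      refine Finset.sum_congr rfl fun z _ => Finset.sum_congr rfl fun i _ => ?_
      ring
    have hd : ∀ z, β' z (Pθ θ z) = (∑ i, θ i * f z i) - Λ θ := fun z => by
      rw [hPθ, he_left]
    have e0 : ∑ z, Λ θ * (Q z - Pθ θ z) = 0 := by
      rw [← Finset.mul_sum, Finset.sum_sub_distrib, hone Q hQ, hone _ (hPθp θ)]; simp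
    rw [hBdiv, hlin, hlin, hH, hH]
    simp only [hd]
    have : ∀ z, β z (Q z) - β z (Pθ θ z) - ((∑ i, θ i * f z i) - Λ θ) * (Q z - Pθ θ z)
        = (β z (Q z) - β z (Pθ θ z)
          - ((∑ i, θ i * f z i) * Q z - (∑ i, θ i * f z i) * Pθ θ z))
          + Λ θ * (Q z - Pθ θ z) := fun z => by ring
    simp only [this]
    rw [Finset.sum_add_distrib, e0, Finset.sum_sub_distrib, Finset.sum_sub_distrib,
      Finset.sum_sub_distrib, add_zero]
  have hBnn : ∀ Q ∈ prob, ∀ θ, 0 ≤ Bdiv Q (Pθ θ) := by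
    intro Q hQ θ
    rw [hBdiv]
    refine Finset.sum_nonneg fun z _ => ?_
    have hpos : 0 < Pθ θ z := by rw [hPθ]; exact he_pos _ _
    exact tangent_aux_s7 (hcv z) (hnn Q hQ z) hpos (hβd z _ hpos)
  have hHcv : ConvexOn ℝ prob H := by
    refine ⟨by rw [hprob']; exact convex_stdSimplex ℝ Z, ?_⟩
    intro x hx y hy a b ha hb hab
    simp only [hH, smul_eq_mul, Finset.mul_sum]
    rw [← Finset.sum_add_distrib]
    exact Finset.sum_le_sum fun z _ => (hcv z).2 (hnn x hx z) (hnn y hy z) ha hb hab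
  have hHc : ContinuousOn H prob := by
    have : H = fun Q => ∑ z, β z (Q z) := funext hH
    rw [this]
    refine continuousOn_finsetSum _ fun z _ => ?_
    exact (hβc z).comp (continuous_apply z).continuousOn fun Q hQ => hnn Q hQ z
  let T : (Z → ℝ) →ₗ[ℝ] (Fin d → ℝ) :=
    { toFun := μ
      map_add' := fun x y => by
        ext i
        simp [hμ, add_mul, Finset.sum_add_distrib]
      map_smul' := fun c x => by
        ext i
        simp [hμ, Finset.mul_sum, mul_assoc] }
  rw [hBE]
  refine ciInf_eq_of_forall_ge_of_forall_gt_exists_lt (fun θ => ?_) (fun w hw => ?_)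
  · have h1 := hBnn _ hRp θ
    rw [hB _ hRp, hRμ] at h1
    rw [hB P hP]
    linarith
  · obtain ⟨θ, hθ⟩ := sep_aux prob (by rw [hprob']; exact isCompact_stdSimplex ℝ Z) H hHcv hHc T
      (Pr P) hRp (fun Q hQ h => hmin Q hQ (h.trans hRμ)) (w - (H P - H (Pr P))) (by linarith)
    refine ⟨θ, ?_⟩
    have h := hθ _ (hPθp θ)
    change _ - ∑ i, θ i * μ (Pr P) i < _ - ∑ i, θ i * μ (Pθ θ) i at h
    rw [hRμ] at h
    rw [hB P hP]
    linarith
end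

section
/- The moment map μ : 𝒫(Z) → ℝ^d, P ↦ Σ_{z∈Z} P(z) f(z), maps 𝒫(Z) onto the convex polytope conv{f(z) : z ∈ Z}, and its restriction to cl(ℰ) is a homeomorphism from cl(ℰ) onto conv{f(z) : z ∈ Z}. -/
open Filter Topology in
theorem aux_cont (b b' : ℝ → ℝ) (hsc : StrictConvexOn ℝ (Set.Ioi 0) b)
    (hd : ∀ x, 0 < x → HasDerivAt b (b' x) x) (e : ℝ → ℝ)
    (hep : ∀ r, 0 < e r) (hel : ∀ r, b' (e r) = r) :
    StrictMonoOn b' (Set.Ioi 0) ∧ ∀ x, 0 < x → ContinuousAt b' x := by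
  have hm : StrictMonoOn b' (Set.Ioi 0) := by
    have h := hsc.strictMonoOn_deriv (fun x hx => (hd x hx).differentiableAt)
    intro x hx y hy hxy
    have := h hx hy hxy
    rwa [(hd x hx).deriv, (hd y hy).deriv] at this
  refine ⟨hm, fun x hx => ?_⟩
  apply hm.continuousAt_of_image_mem_nhds (Ioi_mem_nhds hx)
  have : b' '' Set.Ioi 0 = Set.univ := by
    ext r
    simp only [Set.mem_univ, iff_true]
    exact ⟨e r, hep r, hel r⟩
  rw [this]
  exact univ_mem

open Filter Topology in
theorem aux_lim {Z : Type} [Fintype Z] {ι : Type} {l : Filter ι} (g : Z → ℝ → ℝ)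
    (hc : ∀ z x, 0 < x → ContinuousAt (g z) x)
    (hbot : ∀ z, Tendsto (g z) (𝓝[>] 0) atBot)
    (P : Z → ℝ) (hP : ∀ z, 0 ≤ P z) (R : ι → Z → ℝ) (hR : Tendsto R l (𝓝 P))
    (hRpos : ∀ᶠ n in l, ∀ z, 0 < R n z) (u : Z → ℝ) (hu : ∀ z, P z = 0 → 0 ≤ u z) :
    (∀ z0, P z0 = 0 → 0 < u z0 → Tendsto (fun n => ∑ z, g z (R n z) * u z) l atBot) ∧
    ((∀ z, P z = 0 → u z = 0) →
      Tendsto (fun n => ∑ z, g z (R n z) * u z) l (𝓝 (∑ z, g z (P z) * u z))) := by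
  classical
  have hRz : ∀ z, Tendsto (fun n => R n z) l (𝓝 (P z)) := fun z => (tendsto_pi_nhds.1 hR) z
  have hpos : ∀ z, 0 < P z → Tendsto (fun n => g z (R n z) * u z) l (𝓝 (g z (P z) * u z)) := by
    intro z hz
    exact ((hc z _ hz).tendsto.comp (hRz z)).mul_const _
  have hzero : ∀ z, P z = 0 → 0 < u z → Tendsto (fun n => g z (R n z) * u z) l atBot := by
    intro z hz huz
    refine Tendsto.atBot_mul_const huz ?_
    refine (hbot z).comp ?_
    refine tendsto_nhdsWithin_iff.2 ⟨by simpa [hz] using hRz z, ?_⟩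
    filter_upwards [hRpos] with n hn using hn z
  constructor
  · intro z0 hz0 hu0
    have hbd : ∀ z, ∃ C, ∀ᶠ n in l, g z (R n z) * u z ≤ C := by
      intro z
      rcases (hP z).lt_or_eq with h | h
      · exact ⟨g z (P z) * u z + 1, (hpos z h).eventually_le_const (by linarith)⟩
      · rcases (hu z h.symm).lt_or_eq with h' | h'
        · exact ⟨0, (hzero z h.symm h').eventually_le_atBot 0⟩
        · exact ⟨0, by simp [← h']⟩
    choose C hC using hbd
    have hall := eventually_all.2 hC
    have hdec : ∀ n, ∑ z, g z (R n z) * u z =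
        g z0 (R n z0) * u z0 + ∑ z ∈ Finset.univ.erase z0, g z (R n z) * u z := fun n =>
      (Finset.add_sum_erase _ _ (Finset.mem_univ z0)).symm
    simp_rw [hdec]
    refine tendsto_atBot_add_right_of_ge' l (∑ z ∈ Finset.univ.erase z0, C z)
      (hzero z0 hz0 hu0) ?_
    filter_upwards [hall] with n hn
    exact Finset.sum_le_sum fun z _ => hn z
  · intro h0
    refine tendsto_finset_sum _ fun z _ => ?_
    rcases (hP z).lt_or_eq with h | h
    · exact hpos z h
    · simpa [h0 z h.symm] using tendsto_const_nhds

open Filter Topology in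
theorem aux_min {Z : Type} [Fintype Z] [Nonempty Z] {d : ℕ}
    (β g : Z → ℝ → ℝ)
    (hβc : ∀ z, ContinuousOn (β z) (Set.Ici 0))
    (hβd : ∀ z x, 0 < x → HasDerivAt (β z) (g z x) x)
    (hc : ∀ z x, 0 < x → ContinuousAt (g z) x)
    (hbot : ∀ z, Tendsto (g z) (𝓝[>] 0) atBot)
    (f : Z → Fin d → ℝ) (Q0 : Z → ℝ) (hQ0 : ∀ z, 0 < Q0 z) (hQ0s : ∑ z, Q0 z = 1) :
    ∃ Q : Z → ℝ, ∃ θ : Fin d → ℝ, ∃ r : ℝ, (∀ z, 0 < Q z) ∧ ∑ z, Q z = 1 ∧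
      (∀ i, ∑ z, Q z * f z i = ∑ z, Q0 z * f z i) ∧
      ∀ z, g z (Q z) = (∑ i, θ i * f z i) - r := by
  classical
  let K : Set (Z → ℝ) := stdSimplex ℝ Z ∩ {Q | ∀ i, ∑ z, Q z * f z i = ∑ z, Q0 z * f z i}
  have hKc : IsCompact K := by
    refine (isCompact_stdSimplex ℝ Z).inter_right ?_
    simp only [Set.setOf_forall]
    refine isClosed_iInter fun i => isClosed_eq (by fun_prop) continuous_const
  have hKQ0 : Q0 ∈ K := ⟨⟨fun z => (hQ0 z).le, hQ0s⟩, fun i => rfl⟩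
  have hBc : ContinuousOn (fun Q : Z → ℝ => ∑ z, β z (Q z)) K := by
    refine continuousOn_finset_sum _ fun z _ => ?_
    exact (hβc z).comp (continuous_apply z).continuousOn fun Q hQ => hQ.1.1 z
  obtain ⟨Q, hQK, hQmin⟩ := hKc.exists_isMinOn ⟨Q0, hKQ0⟩ hBc
  have hQ : ∀ z, 0 ≤ Q z := hQK.1.1
  have hmin : ∀ R ∈ K, ∑ z, β z (Q z) ≤ ∑ z, β z (R z) := fun R hR => hQmin hR
  -- derivative along a line
  have hder : ∀ u : Z → ℝ, ∀ t : ℝ, (∀ z, 0 < Q z + t * u z) →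
      HasDerivAt (fun t => ∑ z, β z (Q z + t * u z)) (∑ z, g z (Q z + t * u z) * u z) t := by
    intro u t ht
    refine HasDerivAt.fun_sum fun z _ => ?_
    have h1 : HasDerivAt (fun t : ℝ => Q z + t * u z) (u z) t := by
      simpa using ((hasDerivAt_id t).mul_const (u z)).const_add (Q z)
    exact (hβd z _ (ht z)).comp t h1
  have hline : ∀ u : Z → ℝ, ∑ z, u z = 0 → (∀ i, ∑ z, u z * f z i = 0) → ∀ t : ℝ,
      (∀ z, 0 ≤ Q z + t * u z) → (fun z => Q z + t * u z) ∈ K := by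
    intro u hu0 huf t ht
    refine ⟨⟨ht, ?_⟩, fun i => ?_⟩
    · rw [Finset.sum_add_distrib, ← Finset.mul_sum, hu0, hQK.1.2]; simp
    · simp only [add_mul, mul_assoc]
      rw [Finset.sum_add_distrib, ← Finset.mul_sum, huf i, hQK.2 i]; simp
  have hQpos : ∀ z, 0 < Q z := by
    by_contra! hcon
    obtain ⟨z0, hz0⟩ := hcon
    have hz0 : Q z0 = 0 := le_antisymm hz0 (hQ z0)
    let u : Z → ℝ := fun z => Q0 z - Q z
    have hu0 : ∑ z, u z = 0 := by
      simp only [u, Finset.sum_sub_distrib, hQ0s, hQK.1.2, sub_self]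
    have huf : ∀ i, ∑ z, u z * f z i = 0 := by
      intro i
      simp only [u, sub_mul, Finset.sum_sub_distrib, hQK.2 i, sub_self]
    have hposl : ∀ t : ℝ, 0 < t → t < 1 → ∀ z, 0 < Q z + t * u z := by
      intro t h0 h1 z
      have : Q z + t * u z = (1 - t) * Q z + t * Q0 z := by simp only [u]; ring
      rw [this]
      have := mul_pos h0 (hQ0 z)
      have := mul_nonneg (sub_nonneg.2 h1.le) (hQ z)
      linarith
    have hT := (aux_lim (l := 𝓝[>] (0:ℝ)) g hc hbot Q hQ (fun t z => Q z + t * u z) (by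
        have : Tendsto (fun (t : ℝ) z => Q z + t * u z) (𝓝 0) (𝓝 (fun z => Q z + 0 * u z)) :=
          Continuous.tendsto (by fun_prop) 0
        simp only [zero_mul, add_zero] at this
        exact this.mono_left nhdsWithin_le_nhds) (by
        filter_upwards [Ioo_mem_nhdsGT (show (0:ℝ) < 1 by norm_num)] with t ht
        exact hposl t ht.1 ht.2) u (by
        intro z hz; simp only [u, hz, sub_zero]; exact (hQ0 z).le)).1 z0 hz0 (by
        simp only [u, hz0, sub_zero]; exact hQ0 z0)
    have hev := hT.eventually_lt_atBot 0
    obtain ⟨δ, hδ, hδ'⟩ := mem_nhdsGT_iff_exists_Ioo_subset.1 hev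
    have hδ : (0:ℝ) < δ := hδ
    let t := min (δ / 2) (1 / 2)
    have ht0 : 0 < t := by positivity
    have ht1 : t < 1 := (min_le_right _ _).trans_lt (by norm_num)
    have htδ : t < δ := (min_le_left _ _).trans_lt (by linarith)
    obtain ⟨s, hs, hs'⟩ := exists_hasDerivAt_eq_slope
      (fun t => ∑ z, β z (Q z + t * u z)) (fun t => ∑ z, g z (Q z + t * u z) * u z) ht0 (by
        refine continuousOn_finset_sum _ fun z _ => ?_
        refine (hβc z).comp (by fun_prop) fun s hs => ?_
        rcases hs.1.lt_or_eq with h | h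
        · exact (hposl s h (hs.2.trans_lt ht1) z).le
        · simp [← h, hQ z]) (fun s hs => hder u s (hposl s hs.1 (hs.2.trans ht1)))
    have h1 : ∑ z, g z (Q z + s * u z) * u z < 0 := hδ' ⟨hs.1, hs.2.trans htδ⟩
    have h2 := hmin _ (hline u hu0 huf t fun z => (hposl t ht0 ht1 z).le)
    have h3 : 0 ≤ ((∑ z, β z (Q z + t * u z)) - ∑ z, β z (Q z + 0 * u z)) / (t - 0) := by
      simp only [zero_mul, add_zero, sub_zero]
      exact div_nonneg (sub_nonneg.2 h2) ht0.le
    linarith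
  have horth : ∀ u : Z → ℝ, ∑ z, u z = 0 → (∀ i, ∑ z, u z * f z i = 0) →
      ∑ z, g z (Q z) * u z = 0 := by
    intro u hu0 huf
    have h1 := hder u 0 (by simpa using hQpos)
    have h2 : IsLocalMin (fun t : ℝ => ∑ z, β z (Q z + t * u z)) 0 := by
      have hev : ∀ᶠ t : ℝ in 𝓝 0, ∀ z, 0 < Q z + t * u z := by
        refine eventually_all.2 fun z => ?_
        have : Tendsto (fun t : ℝ => Q z + t * u z) (𝓝 0) (𝓝 (Q z + 0 * u z)) :=
          Continuous.tendsto (by fun_prop) 0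
        exact this.eventually (lt_mem_nhds (by simpa using hQpos z))
      filter_upwards [hev] with t ht
      simpa using hmin _ (hline u hu0 huf t fun z => (ht z).le)
    simpa using h2.hasDerivAt_eq_zero h1
  let lin : (Z → ℝ) → (Z → ℝ) →ₗ[ℝ] ℝ := fun c => ∑ z, c z • LinearMap.proj z
  have hlin : ∀ c u, lin c u = ∑ z, c z * u z := by
    intro c u; simp [lin, LinearMap.sum_apply]
  let L : Option (Fin d) → (Z → ℝ) →ₗ[ℝ] ℝ := fun o =>
    match o with
    | none => lin fun _ => 1
    | some i => lin fun z => f z i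
  have hspan := mem_span_of_iInf_ker_le_ker (L := L) (K := lin fun z => g z (Q z)) (by
    intro u hu
    simp only [Submodule.mem_iInf, LinearMap.mem_ker] at hu ⊢
    rw [hlin]
    apply horth
    · have := hu none
      simpa [L, hlin] using this
    · intro i
      have := hu (some i)
      simpa [L, hlin, mul_comm] using this)
  obtain ⟨c, hcc⟩ := (Submodule.mem_span_range_iff_exists_fun ℝ).1 hspan
  refine ⟨Q, fun i => c (some i), - c none, hQpos, hQK.1.2, hQK.2, fun z => ?_⟩
  have := congrArg (fun F => F (Pi.single z 1)) hcc
  simp only [Fintype.sum_option, LinearMap.add_apply, LinearMap.sum_apply, LinearMap.smul_apply,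
    L, hlin, Pi.single_apply] at this
  simp at this
  linarith

theorem stmt_8 {Z : Type} [Fintype Z] [Nonempty Z] {d : ℕ}
    (β β' : Z → ℝ → ℝ)
    (hβc : ∀ z, ContinuousOn (β z) (Set.Ici 0))
    (hβsc : ∀ z, StrictConvexOn ℝ (Set.Ioi 0) (β z))
    (hβd : ∀ z x, 0 < x → HasDerivAt (β z) (β' z x) x)
    (hβ'bot : ∀ z, Filter.Tendsto (β' z) (nhdsWithin 0 (Set.Ioi 0)) Filter.atBot)
    (hβ'top : ∀ z, Filter.Tendsto (β' z) Filter.atTop Filter.atTop)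
    (e : Z → ℝ → ℝ)
    (he_pos : ∀ z r, 0 < e z r)
    (he_left : ∀ z r, β' z (e z r) = r)
    (he_right : ∀ z x, 0 < x → e z (β' z x) = x)
    (f : Z → Fin d → ℝ)
    (prob : Set (Z → ℝ))
    (hprob : prob = {P : Z → ℝ | (∀ z, 0 ≤ P z) ∧ (∑ z, P z) = 1})
    (μ : (Z → ℝ) → Fin d → ℝ)
    (hμ : ∀ P i, μ P i = ∑ z, P z * f z i)
    (Λ : (Fin d → ℝ) → ℝ)
    (hΛ : ∀ θ, (∑ z, e z ((∑ i, θ i * f z i) - Λ θ)) = 1)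
    (Pθ : (Fin d → ℝ) → Z → ℝ)
    (hPθ : ∀ θ z, Pθ θ z = e z ((∑ i, θ i * f z i) - Λ θ)) :
    μ '' prob = convexHull ℝ (Set.range f) ∧
    ∃ h : ↥(closure {R : Z → ℝ | ∃ θ : Fin d → ℝ, R = Pθ θ}) ≃ₜ
          ↥(convexHull ℝ (Set.range f)),
      ∀ Q : ↥(closure {R : Z → ℝ | ∃ θ : Fin d → ℝ, R = Pθ θ}),
        (h Q : Fin d → ℝ) = μ (Q : Z → ℝ) := by
  classical
  have hcm := fun z => aux_cont (β z) (β' z) (hβsc z) (hβd z) (e z) (he_pos z) (he_left z)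
  have hmono := fun z => (hcm z).1
  have hc := fun z => (hcm z).2
  have hprob' : prob = stdSimplex ℝ Z := hprob
  have hμc : Continuous μ := by
    refine continuous_pi fun i => ?_
    simp_rw [hμ]
    fun_prop
  have himg : μ '' prob = convexHull ℝ (Set.range f) := by
    have hl : IsLinearMap ℝ μ := by
      constructor
      · intro P Q; ext i
        simp only [hμ, Pi.add_apply, add_mul, Finset.sum_add_distrib]
      · intro a P; ext i
        simp only [hμ, Pi.smul_apply, smul_eq_mul, mul_assoc, Finset.mul_sum]
    rw [hprob', ← convexHull_rangle_single_eq_stdSimplex, hl.image_convexHull, ← Set.range_comp]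
    congr 2
    ext z i
    simp [hμ, Pi.single_apply]
  set E : Set (Z → ℝ) := {R : Z → ℝ | ∃ θ : Fin d → ℝ, R = Pθ θ} with hE
  have hEpos : ∀ R ∈ E, ∀ z, 0 < R z := by
    rintro R ⟨θ, rfl⟩ z
    rw [hPθ]; exact he_pos _ _
  have hEprob : E ⊆ prob := by
    intro R hR
    rw [hprob]
    refine ⟨fun z => (hEpos R hR z).le, ?_⟩
    obtain ⟨θ, rfl⟩ := hR
    simp_rw [hPθ]; exact hΛ θ
  have hclprob : closure E ⊆ prob := by
    refine closure_minimal hEprob ?_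
    rw [hprob']; exact isClosed_stdSimplex ℝ Z
  have hclc : IsCompact (closure E) := by
    refine IsCompact.of_isClosed_subset ?_ isClosed_closure hclprob
    rw [hprob']; exact isCompact_stdSimplex ℝ Z
  have horth : ∀ R ∈ E, ∀ u : Z → ℝ, ∑ z, u z = 0 → (∀ i, ∑ z, u z * f z i = 0) →
      ∑ z, β' z (R z) * u z = 0 := by
    rintro R ⟨θ, rfl⟩ u hu0 huf
    simp_rw [hPθ, he_left, sub_mul, Finset.sum_sub_distrib, ← Finset.mul_sum, hu0,
      Finset.sum_mul]
    rw [Finset.sum_comm]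
    have : ∀ i, ∑ z, θ i * f z i * u z = 0 := by
      intro i
      have := huf i
      calc ∑ z, θ i * f z i * u z = θ i * ∑ z, u z * f z i := by
            rw [Finset.mul_sum]; exact Finset.sum_congr rfl fun z _ => by ring
        _ = 0 := by rw [this, mul_zero]
    simp [this]
  have hkey : ∀ P ∈ closure E, ∀ Q ∈ prob, μ Q = μ P →
      (∀ z, P z = 0 → Q z = 0) ∧ ∑ z, β' z (P z) * (Q z - P z) = 0 := by
    intro P hP Q hQ hμQ
    have hPp := hclprob hP
    rw [hprob] at hPp hQ
    obtain ⟨R, hRE, hR⟩ := mem_closure_iff_seq_limit.1 hP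
    let u : Z → ℝ := fun z => Q z - P z
    have hu0 : ∑ z, u z = 0 := by
      simp only [u, Finset.sum_sub_distrib, hQ.2, hPp.2, sub_self]
    have huf : ∀ i, ∑ z, u z * f z i = 0 := by
      intro i
      have := congrFun hμQ i
      rw [hμ, hμ] at this
      simp only [u, sub_mul, Finset.sum_sub_distrib, this, sub_self]
    have h0 : ∀ n, ∑ z, β' z (R n z) * u z = 0 := fun n => horth _ (hRE n) u hu0 huf
    have hlim := aux_lim β' hc hβ'bot P hPp.1 R hR
      (Filter.Eventually.of_forall fun n => hEpos _ (hRE n)) u (by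
        intro z hz; simp only [u, hz, sub_zero]; exact hQ.1 z)
    have hs : ∀ z, P z = 0 → Q z = 0 := by
      intro z hz
      by_contra hne
      have := hlim.1 z hz (by
        simp only [u, hz, sub_zero]; exact lt_of_le_of_ne (hQ.1 z) (Ne.symm hne))
      simp only [h0] at this
      obtain ⟨n, hn⟩ := (this.eventually_lt_atBot 0).exists
      exact lt_irrefl _ hn
    refine ⟨hs, ?_⟩
    have := hlim.2 (by intro z hz; simp only [u, hz, hs z hz, sub_zero])
    simp only [h0] at this
    exact (tendsto_nhds_unique this tendsto_const_nhds)
  have hinj : ∀ P ∈ closure E, ∀ Q ∈ closure E, μ P = μ Q → P = Q := by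
    intro P hP Q hQ h
    obtain ⟨h1, h2⟩ := hkey P hP Q (hclprob hQ) h.symm
    obtain ⟨h3, h4⟩ := hkey Q hQ P (hclprob hP) h
    have hPp := hclprob hP
    have hQp := hclprob hQ
    rw [hprob] at hPp hQp
    have hterm : ∀ z, P z ≠ Q z → 0 < (β' z (P z) - β' z (Q z)) * (P z - Q z) := by
      intro z hz
      have hPz : 0 < P z := lt_of_le_of_ne (hPp.1 z) fun h => hz (by rw [h1 z h.symm, ← h])
      have hQz : 0 < Q z := lt_of_le_of_ne (hQp.1 z) fun h => hz (by rw [h3 z h.symm, ← h])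
      rcases lt_or_gt_of_ne hz with hlt | hlt
      · exact mul_pos_of_neg_of_neg (sub_neg.2 (hmono z hPz hQz hlt)) (sub_neg.2 hlt)
      · exact mul_pos (sub_pos.2 (hmono z hQz hPz hlt)) (sub_pos.2 hlt)
    have hsum : ∑ z, (β' z (P z) - β' z (Q z)) * (P z - Q z) = 0 := by
      have : ∀ z, (β' z (P z) - β' z (Q z)) * (P z - Q z) =
          - (β' z (P z) * (Q z - P z)) - β' z (Q z) * (P z - Q z) := fun z => by ring
      simp_rw [this, Finset.sum_sub_distrib, Finset.sum_neg_distrib, h2, h4]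
      simp
    have hnn : ∀ z ∈ Finset.univ, 0 ≤ (β' z (P z) - β' z (Q z)) * (P z - Q z) := by
      intro z _
      by_cases hz : P z = Q z
      · simp [hz]
      · exact (hterm z hz).le
    ext z
    by_contra hz
    exact (hterm z hz).ne' ((Finset.sum_eq_zero_iff_of_nonneg hnn).1 hsum z (Finset.mem_univ z))
  have hemono : ∀ z, StrictMono (e z) := by
    intro z r s hrs
    by_contra! hle
    have := (hmono z).monotoneOn (he_pos z s) (he_pos z r) hle
    rw [he_left, he_left] at this
    linarith
  have hsurj0 : ∀ Q ∈ prob, (∀ z, 0 < Q z) → μ Q ∈ μ '' closure E := by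
    intro Q0 hQ0 hpos
    rw [hprob] at hQ0
    obtain ⟨Q, θ, r, hQpos, hQs, hQμ, hQg⟩ :=
      aux_min β β' hβc hβd hc hβ'bot f Q0 hpos hQ0.2
    have hQe : ∀ z, Q z = e z ((∑ i, θ i * f z i) - r) := fun z => by
      rw [← hQg, he_right z _ (hQpos z)]
    have hr : r = Λ θ := by
      have h1 := hΛ θ
      simp_rw [hQe] at hQs
      rcases lt_trichotomy r (Λ θ) with h | h | h
      · have := Finset.sum_lt_sum_of_nonempty Finset.univ_nonempty
          fun z (_ : z ∈ Finset.univ) => hemono z (sub_lt_sub_left h (∑ i, θ i * f z i))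
        linarith
      · exact h
      · have := Finset.sum_lt_sum_of_nonempty Finset.univ_nonempty
          fun z (_ : z ∈ Finset.univ) => hemono z (sub_lt_sub_left h (∑ i, θ i * f z i))
        linarith
    refine ⟨Q, subset_closure ⟨θ, ?_⟩, ?_⟩
    · ext z; rw [hQe, hPθ, hr]
    · ext i; rw [hμ, hμ, hQμ]
  have hsurj : ∀ Q ∈ prob, μ Q ∈ μ '' closure E := by
    intro Q hQ
    have hcl : IsClosed (μ '' closure E) := (hclc.image hμc).isClosed
    obtain ⟨U, hU, hUpos⟩ : ∃ U ∈ prob, ∀ z, 0 < U z := by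
      have hm : Pθ 0 ∈ E := ⟨0, rfl⟩
      exact ⟨Pθ 0, hEprob hm, hEpos _ hm⟩
    rw [hprob] at hU hQ
    have hT : Filter.Tendsto (fun t : ℝ => μ (fun z => (1 - t) * Q z + t * U z))
        (nhdsWithin 0 (Set.Ioi 0)) (nhds (μ Q)) := by
      have : Filter.Tendsto (fun t : ℝ => μ (fun z => (1 - t) * Q z + t * U z))
        (nhds 0) (nhds (μ (fun z => (1 - 0) * Q z + 0 * U z))) :=
        Continuous.tendsto (hμc.comp (by fun_prop)) 0
      simp only [sub_zero, one_mul, zero_mul, add_zero] at this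
      exact this.mono_left nhdsWithin_le_nhds
    refine hcl.mem_of_tendsto hT ?_
    filter_upwards [Ioo_mem_nhdsGT (show (0:ℝ) < 1 by norm_num)] with t ht
    have hp : ∀ z, 0 < (1 - t) * Q z + t * U z := by
      intro z
      have := mul_pos ht.1 (hUpos z)
      have := mul_nonneg (sub_nonneg.2 ht.2.le) (hQ.1 z)
      linarith
    refine hsurj0 _ ?_ hp
    rw [hprob]
    refine ⟨fun z => (hp z).le, ?_⟩
    rw [Finset.sum_add_distrib, ← Finset.mul_sum, ← Finset.mul_sum, hQ.2, hU.2]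
    ring
  refine ⟨himg, ?_⟩
  let F : ↥(closure E) → ↥(convexHull ℝ (Set.range f)) := fun Q =>
    ⟨μ Q, himg ▸ Set.mem_image_of_mem μ (hclprob Q.2)⟩
  have hF : Function.Bijective F := by
    constructor
    · intro P Q h
      exact Subtype.ext (hinj P P.2 Q Q.2 (congrArg Subtype.val h))
    · rintro ⟨a, ha⟩
      obtain ⟨Q, hQ, rfl⟩ := himg.symm ▸ ha
      obtain ⟨P, hP, hPQ⟩ := hsurj Q hQ
      exact ⟨⟨P, hP⟩, Subtype.ext hPQ⟩
  haveI : CompactSpace ↥(closure E) := isCompact_iff_compactSpace.1 hclc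
  have hFc : Continuous (Equiv.ofBijective F hF) :=
    Continuous.subtype_mk (hμc.comp continuous_subtype_val) _
  exact ⟨hFc.homeoOfEquivCompactToT2, fun Q => rfl⟩
end

section
/- Call a subset S ⊆ Z facial if there exists a face F of the polytope conv{f(z) : z ∈ Z} (that is, a convex subset F that is extreme in conv{f(z) : z ∈ Z}) such that S = {z ∈ Z : f(z) ∈ F}. For every P ∈ 𝒫(Z), supp(Π_P) is the smallest facial set containing supp(P): supp(Π_P) is facial, supp(P) ⊆ supp(Π_P), and supp(Π_P) ⊆ S for every facial set S with supp(P) ⊆ S. -/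
open Filter Topology

lemma aux_slope_bot (b b' : ℝ → ℝ) (hc : ContinuousOn b (Set.Ici 0))
    (hd : ∀ x, 0 < x → HasDerivAt b (b' x) x)
    (hbot : Tendsto b' (𝓝[>] 0) atBot) (q : ℝ) (hq : 0 < q) (M : ℝ) :
    ∀ᶠ t in 𝓝[>] (0:ℝ), b (t * q) - b 0 ≤ M * t := by
  have h1 := hbot.eventually_le_atBot (M / q)
  rw [eventually_nhdsWithin_iff, Metric.eventually_nhds_iff] at h1
  obtain ⟨δ, hδ, h1⟩ := h1
  have h2 : ∀ᶠ t in 𝓝[>] (0:ℝ), t < δ / q :=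
    eventually_nhdsWithin_of_eventually_nhds (eventually_lt_nhds (by positivity))
  filter_upwards [h2, self_mem_nhdsWithin] with t ht ht0
  have ht0 : 0 < t := ht0
  have htq : 0 < t * q := by positivity
  obtain ⟨c, hcm, hce⟩ := exists_hasDerivAt_eq_slope b b' htq
    (hc.mono Set.Icc_subset_Ici_self) (fun x hx => hd x hx.1)
  have hlt : t * q < δ := by rwa [lt_div_iff₀ hq] at ht
  have h3 : b' c ≤ M / q := by
    apply h1 _ hcm.1
    rw [Real.dist_eq, sub_zero, abs_of_pos hcm.1]
    exact hcm.2.trans hlt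
  rw [hce, sub_zero, div_le_div_iff₀ htq hq] at h3
  have : (b (t * q) - b 0) * q ≤ (M * t) * q := by linarith
  exact le_of_mul_le_mul_right this hq

lemma aux_slope_bdd (b b' : ℝ → ℝ) 
    (hd : ∀ x, 0 < x → HasDerivAt b (b' x) x) (p v : ℝ) (hp : 0 < p) :
    ∃ C, ∀ᶠ t in 𝓝[>] (0:ℝ), b (p + t * v) - b p ≤ C * t := by
  have h : HasDerivAt (fun t => b (p + t * v)) (b' p * v) 0 := by
    have h1 : HasDerivAt (fun t : ℝ => p + t * v) v 0 := by
      simpa using ((hasDerivAt_id (0:ℝ)).mul_const v).const_add p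
    have h2 : HasDerivAt b (b' p) (p + 0 * v) := by simpa using hd p hp
    exact HasDerivAt.comp (0:ℝ) h2 h1
  refine ⟨b' p * v + 1, ?_⟩
  have h3 := (hasDerivAt_iff_tendsto_slope_zero.1 h)
  have h4 : 𝓝[>] (0:ℝ) ≤ 𝓝[≠] 0 := nhdsWithin_mono _ (fun x hx => ne_of_gt hx)
  have h5 := (h3.mono_left h4).eventually_lt_const (lt_add_one _)
  filter_upwards [h5, self_mem_nhdsWithin] with t ht ht0
  have ht0 : 0 < t := ht0
  simp only [zero_add, zero_mul, add_zero, smul_eq_mul] at ht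
  rw [inv_mul_lt_iff₀ ht0] at ht
  linarith

lemma aux_supp {Z : Type} [Fintype Z] (β β' : Z → ℝ → ℝ)
    (hβc : ∀ z, ContinuousOn (β z) (Set.Ici 0))
    (hβd : ∀ z x, 0 < x → HasDerivAt (β z) (β' z x) x)
    (hβ'bot : ∀ z, Tendsto (β' z) (𝓝[>] 0) atBot)
    (p q : Z → ℝ) (hp : ∀ z, 0 ≤ p z) (hq : ∀ z, 0 ≤ q z)
    (hmin : ∀ t : ℝ, 0 < t → t < 1 → ∑ z, β z (p z) ≤ ∑ z, β z (p z + t * (q z - p z)))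
    (z : Z) (hz : 0 < q z) : 0 < p z := by
  classical
  by_contra hpz
  have hpz : p z = 0 := le_antisymm (not_lt.1 hpz) (hp z)
  have hC : ∀ w, ∃ C, ∀ᶠ t in 𝓝[>] (0:ℝ),
      β w (p w + t * (q w - p w)) - β w (p w) ≤ C * t := by
    intro w
    rcases (hp w).lt_or_eq with h | h
    · exact aux_slope_bdd (β w) (β' w) (hβd w) _ _ h
    · rw [← h]
      rcases (hq w).lt_or_eq with h' | h'
      · exact ⟨0, by simpa using aux_slope_bot (β w) (β' w) (hβc w) (hβd w) (hβ'bot w) _ h' 0⟩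
      · exact ⟨0, by simp [← h']⟩
  choose C hC using hC
  have hM := aux_slope_bot (β z) (β' z) (hβc z) (hβd z) (hβ'bot z) _ hz
    (-(∑ w ∈ Finset.univ.erase z, C w) - 1)
  have hall : ∀ᶠ t in 𝓝[>] (0:ℝ), ∀ w,
      β w (p w + t * (q w - p w)) - β w (p w) ≤ C w * t := eventually_all.2 hC
  have h1 : ∀ᶠ t in 𝓝[>] (0:ℝ), t < 1 :=
    eventually_nhdsWithin_of_eventually_nhds (eventually_lt_nhds one_pos)
  obtain ⟨t, hM, hall, h1, ht0⟩ := (hM.and (hall.and (h1.and self_mem_nhdsWithin))).exists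
  have ht0 : 0 < t := ht0
  have hm := hmin t ht0 h1
  rw [← Finset.add_sum_erase _ _ (Finset.mem_univ z),
    ← Finset.add_sum_erase _ (fun z => β z (p z + t * (q z - p z))) (Finset.mem_univ z)] at hm
  have hs := Finset.sum_le_sum (s := Finset.univ.erase z) (fun w _ => hall w)
  rw [Finset.sum_sub_distrib, ← Finset.sum_mul] at hs
  simp only [hpz, zero_add, sub_zero] at hm
  nlinarith


theorem stmt_9 {Z : Type} [Fintype Z] [Nonempty Z] {d : ℕ}
    (β β' : Z → ℝ → ℝ)
    (hβc : ∀ z, ContinuousOn (β z) (Set.Ici 0))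
    (hβsc : ∀ z, StrictConvexOn ℝ (Set.Ioi 0) (β z))
    (hβd : ∀ z x, 0 < x → HasDerivAt (β z) (β' z x) x)
    (hβ'bot : ∀ z, Filter.Tendsto (β' z) (nhdsWithin 0 (Set.Ioi 0)) Filter.atBot)
    (hβ'top : ∀ z, Filter.Tendsto (β' z) Filter.atTop Filter.atTop)
    (f : Z → Fin d → ℝ)
    (prob : Set (Z → ℝ))
    (hprob : prob = {P : Z → ℝ | (∀ z, 0 ≤ P z) ∧ (∑ z, P z) = 1})
    (μ : (Z → ℝ) → Fin d → ℝ)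
    (hμ : ∀ P i, μ P i = ∑ z, P z * f z i)
    (H : (Z → ℝ) → ℝ)
    (hH : ∀ Q, H Q = ∑ z, β z (Q z))
    (Pr : (Z → ℝ) → Z → ℝ)
    (hPr : ∀ P ∈ prob, Pr P ∈ prob ∧ μ (Pr P) = μ P ∧
      (∀ Q ∈ prob, μ Q = μ P → H (Pr P) ≤ H Q) ∧
      (∀ Q ∈ prob, μ Q = μ P → H Q = H (Pr P) → Q = Pr P))
    (Facial : Set Z → Prop)
    (hFacial : ∀ S : Set Z, Facial S ↔ ∃ F : Set (Fin d → ℝ),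
      Convex ℝ F ∧ IsExtreme ℝ (convexHull ℝ (Set.range f)) F ∧ S = {z | f z ∈ F}) :
    ∀ P ∈ prob,
      Facial {z | 0 < Pr P z} ∧
      {z | 0 < P z} ⊆ {z | 0 < Pr P z} ∧
      (∀ S : Set Z, Facial S → {z | 0 < P z} ⊆ S → {z | 0 < Pr P z} ⊆ S) := by
  classical
  intro P hP
  obtain ⟨hp, hμp, hmin, -⟩ := hPr P hP
  generalize Pr P = p at *
  have hprob' : prob = stdSimplex ℝ Z := hprob
  have hconv : Convex ℝ prob := hprob' ▸ convex_stdSimplex ℝ Z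
  set L := Fintype.linearCombination ℝ f with hL
  have hLμ : ∀ Q, μ Q = L Q := by
    intro Q
    ext i
    rw [hμ, hL, Fintype.linearCombination_apply]
    simp
  simp only [hLμ] at *
  have hnn : ∀ Q ∈ prob, ∀ z, 0 ≤ Q z := by
    intro Q hQ; rw [hprob] at hQ; exact hQ.1
  have hsum : ∀ Q ∈ prob, ∑ z, Q z = 1 := by
    intro Q hQ; rw [hprob] at hQ; exact hQ.2
  have hmk : ∀ Q : Z → ℝ, (∀ z, 0 ≤ Q z) → ∑ z, Q z = 1 → Q ∈ prob := by
    intro Q h1 h2; rw [hprob]; exact ⟨h1, h2⟩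
  have hδ : ∀ z, (Pi.single z 1 : Z → ℝ) ∈ prob := by
    intro z; rw [hprob']; exact single_mem_stdSimplex ℝ z
  have hLδ : ∀ z, L (Pi.single z 1) = f z := by
    intro z; simp [hL, Fintype.linearCombination_apply_single]
  have hhull : convexHull ℝ (Set.range f) = L '' prob := by
    apply Set.Subset.antisymm
    · apply convexHull_min _ (hconv.linear_image L)
      rintro _ ⟨z, rfl⟩
      exact ⟨_, hδ z, hLδ z⟩
    · rintro _ ⟨Q, hQ, rfl⟩
      rw [hL, Fintype.linearCombination_apply]
      exact (convex_convexHull ℝ _).sum_mem (fun z _ => hnn Q hQ z) (hsum Q hQ)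
        (fun z _ => subset_convexHull ℝ _ ⟨z, rfl⟩)
  have A : ∀ Q ∈ prob, L Q = L P → ∀ z, 0 < Q z → 0 < p z := by
    intro Q hQ hQP z hz
    refine aux_supp β β' hβc hβd hβ'bot p Q (hnn p hp) (hnn Q hQ) ?_ z hz
    intro t ht0 ht1
    have := hmin (p + t • (Q - p)) (hconv.add_smul_sub_mem hp hQ ⟨ht0.le, ht1.le⟩)
      (by simp [hQP, hμp])
    simpa [hH] using this
  have B : ∀ Q ∈ prob, ∀ R ∈ prob, L R = L Q → (∀ z, 0 < Q z → 0 < p z) →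
      ∀ z, 0 < R z → 0 < p z := by
    intro Q hQ R hR hRQ hs z hz
    -- find ε
    have hε : ∃ ε : ℝ, 0 < ε ∧ ∀ w, ε * Q w ≤ p w := by
      have : ∀ᶠ t in 𝓝[>] (0:ℝ), ∀ w, t * Q w ≤ p w := by
        rw [eventually_all]
        intro w
        rcases (hnn Q hQ w).lt_or_eq with h | h
        · have h1 : ∀ᶠ t in 𝓝[>] (0:ℝ), t < p w / Q w :=
            eventually_nhdsWithin_of_eventually_nhds
              (eventually_lt_nhds (div_pos (hs w h) h))
          filter_upwards [h1] with t ht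
          rw [lt_div_iff₀ h] at ht
          exact ht.le
        · simp [← h, hnn p hp w]
      obtain ⟨t, h1, h2⟩ := (this.and self_mem_nhdsWithin).exists
      exact ⟨t, h2, h1⟩
    obtain ⟨ε, hε0, hε⟩ := hε
    by_contra hpz
    have hQz : ¬ 0 < Q z := fun h => hpz (hs z h)
    have hQz : Q z = 0 := le_antisymm (not_lt.1 hQz) (hnn Q hQ z)
    apply hpz
    apply A (p + ε • (R - Q))
    · apply hmk
      · intro w
        have := hε w
        have := mul_nonneg hε0.le (hnn R hR w)
        simp only [Pi.add_apply, Pi.smul_apply, Pi.sub_apply, smul_eq_mul]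
        linarith
      · simp [Finset.sum_add_distrib, ← Finset.mul_sum, hsum _ hR, hsum _ hQ, hsum _ hp]
    · simp [hRQ, hμp]
    · have := mul_pos hε0 hz
      have := hnn p hp z
      simp only [Pi.add_apply, Pi.smul_apply, Pi.sub_apply, smul_eq_mul, hQz, sub_zero]
      linarith
  refine ⟨?_, fun z hz => A P hP rfl z hz, ?_⟩
  · rw [hFacial]
    refine ⟨L '' {Q | Q ∈ prob ∧ ∀ z, 0 < Q z → 0 < p z}, ?_, ?_, ?_⟩
    · apply Convex.linear_image
      rintro Q ⟨hQ, hQ'⟩ R ⟨hR, hR'⟩ a b ha hb hab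
      refine ⟨hconv hQ hR ha hb hab, ?_⟩
      intro z hz
      by_contra h
      have h1 : Q z ≤ 0 := not_lt.1 fun h' => h (hQ' z h')
      have h2 : R z ≤ 0 := not_lt.1 fun h' => h (hR' z h')
      simp only [Pi.add_apply, Pi.smul_apply, smul_eq_mul] at hz
      nlinarith
    · rw [hhull]
      refine ⟨Set.image_mono fun Q hQ => hQ.1, ?_⟩
      rintro _ ⟨Q, hQ, rfl⟩ _ ⟨R, hR, rfl⟩ _ ⟨T, ⟨hT, hT'⟩, rfl⟩ ⟨a, b, ha, hb, hab, he⟩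
      refine ⟨Q, ⟨hQ, ?_⟩, rfl⟩
      intro z hz
      apply B T hT (a • Q + b • R) (hconv hQ hR ha.le hb.le hab) (by simpa using he) hT' z
      have := mul_pos ha hz
      have := mul_nonneg hb.le (hnn R hR z)
      simp only [Pi.add_apply, Pi.smul_apply, smul_eq_mul]
      linarith
    · ext z
      constructor
      · intro hz
        refine ⟨Pi.single z 1, ⟨hδ z, ?_⟩, hLδ z⟩
        intro w hw
        by_cases h : w = z
        · rw [h]; exact hz
        · simp [h] at hw
      · rintro ⟨Q, ⟨hQ, hQ'⟩, he⟩
        exact B Q hQ _ (hδ z) (by rw [hLδ, he]) hQ' z (by simp)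
  · intro S hS hPS z hz
    obtain ⟨F, hF, hE, rfl⟩ := (hFacial S).1 hS
    have hz : 0 < p z := hz
    show f z ∈ F
    have hPF : L P ∈ F := by
      rw [hL, Fintype.linearCombination_apply,
        ← Finset.sum_subset (Finset.filter_subset (fun z => 0 < P z) Finset.univ)]
      · apply hF.sum_mem (fun z _ => hnn P hP z)
        · rw [← hsum P hP]
          apply Finset.sum_subset (Finset.filter_subset _ _)
          intro w _ hw
          simp only [Finset.mem_filter, Finset.mem_univ, true_and, not_lt] at hw
          exact le_antisymm hw (hnn P hP w)
        · intro w hw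
          exact hPS (Finset.mem_filter.1 hw).2
      · intro w _ hw
        simp only [Finset.mem_filter, Finset.mem_univ, true_and, not_lt] at hw
        rw [le_antisymm hw (hnn P hP w), zero_smul]
    have hle : ∀ w, (Pi.single z (p z) : Z → ℝ) w ≤ p w := by
      intro w
      by_cases h : w = z
      · subst h; simp
      · simp [h, hnn p hp w]
    have hsd : ∑ w, (p - Pi.single z (p z) : Z → ℝ) w = 1 - p z := by
      simp [hsum p hp]
    have hsnn : ∀ w, 0 ≤ (p - Pi.single z (p z) : Z → ℝ) w := fun w => by
      simpa using hle w
    have hp1 : 0 ≤ 1 - p z := hsd ▸ Finset.sum_nonneg fun w _ => hsnn w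
    have hLs : L (Pi.single z (p z)) = p z • f z := by
      simp [hL, Fintype.linearCombination_apply_single]
    rcases hp1.lt_or_eq with h | h
    · have hR : (1 - p z)⁻¹ • (p - Pi.single z (p z) : Z → ℝ) ∈ prob := by
        apply hmk
        · intro w
          exact mul_nonneg (inv_nonneg.2 hp1) (hsnn w)
        · simp only [Pi.smul_apply, smul_eq_mul]
          rw [← Finset.mul_sum, hsd, inv_mul_cancel₀ h.ne']
      refine hE.2 (subset_convexHull ℝ _ ⟨z, rfl⟩)
        (hhull ▸ Set.mem_image_of_mem L hR) hPF ⟨p z, 1 - p z, hz, h, by ring, ?_⟩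
      rw [map_smul, smul_inv_smul₀ h.ne', map_sub, hLs, hμp]
      abel
    · have h0 : p = Pi.single z (p z) := by
        rw [← h, Finset.sum_eq_zero_iff_of_nonneg fun w _ => hsnn w] at hsd
        ext w
        have := hsd w (Finset.mem_univ w)
        rwa [Pi.sub_apply, sub_eq_zero] at this
      have h1 : p z = 1 := by linarith
      rw [h1] at h0
      rw [← hLδ z, ← h0, hμp]
      exact hPF
end

section
/- Let P ∈ 𝒫(Z) and set u := P − Π_P, and assume u ≠ 0. Then Π_P is also the unique minimizer of H over the set {R ∈ 𝒫(Z) : R − P ∈ ℝ·u}; that is, Π_u(P) = Π_P. Consequently Σ_z (P(z) − Π_u(P)(z))·u(z) > 0, i.e. P ∈ 𝒫_u^+. -/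
theorem stmt_13 {Z : Type} [Fintype Z] [Nonempty Z] {d : ℕ}
    (β β' : Z → ℝ → ℝ)
    (hβc : ∀ z, ContinuousOn (β z) (Set.Ici 0))
    (hβsc : ∀ z, StrictConvexOn ℝ (Set.Ioi 0) (β z))
    (hβd : ∀ z x, 0 < x → HasDerivAt (β z) (β' z x) x)
    (hβ'bot : ∀ z, Filter.Tendsto (β' z) (nhdsWithin 0 (Set.Ioi 0)) Filter.atBot)
    (hβ'top : ∀ z, Filter.Tendsto (β' z) Filter.atTop Filter.atTop)
    (f : Z → Fin d → ℝ)
    (prob : Set (Z → ℝ))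
    (hprob : prob = {P : Z → ℝ | (∀ z, 0 ≤ P z) ∧ (∑ z, P z) = 1})
    (μ : (Z → ℝ) → Fin d → ℝ)
    (hμ : ∀ P i, μ P i = ∑ z, P z * f z i)
    (H : (Z → ℝ) → ℝ)
    (hH : ∀ Q, H Q = ∑ z, β z (Q z))
    (Pr : (Z → ℝ) → Z → ℝ)
    (hPr : ∀ P ∈ prob, Pr P ∈ prob ∧ μ (Pr P) = μ P ∧
      (∀ Q ∈ prob, μ Q = μ P → H (Pr P) ≤ H Q) ∧
      (∀ Q ∈ prob, μ Q = μ P → H Q = H (Pr P) → Q = Pr P))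
    (Pru : (Z → ℝ) → (Z → ℝ) → Z → ℝ)
    (hPru : ∀ u : Z → ℝ, (∑ z, u z) = 0 → u ≠ 0 → ∀ Q ∈ prob,
      Pru u Q ∈ prob ∧ (∃ t : ℝ, ∀ z, Pru u Q z - Q z = t * u z) ∧
      (∀ R ∈ prob, (∃ t : ℝ, ∀ z, R z - Q z = t * u z) → H (Pru u Q) ≤ H R) ∧
      (∀ R ∈ prob, (∃ t : ℝ, ∀ z, R z - Q z = t * u z) → H R = H (Pru u Q) → R = Pru u Q))
    (Pplus : (Z → ℝ) → Set (Z → ℝ))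
    (hPplus : ∀ u, Pplus u = {Q | Q ∈ prob ∧ 0 < ∑ z, (Q z - Pru u Q z) * u z})
    (P : Z → ℝ) (hP : P ∈ prob)
    (hne : P - Pr P ≠ 0) :
    Pru (P - Pr P) P = Pr P ∧ P ∈ Pplus (P - Pr P) := by
  obtain ⟨h1, h2, h3, h4⟩ := hPr P hP
  have hs1 : ∑ z, P z = 1 := by rw [hprob] at hP; exact hP.2
  have hs2 : ∑ z, Pr P z = 1 := by rw [hprob] at h1; exact h1.2
  have hu0 : ∑ z, (P - Pr P) z = 0 := by
    simp [Finset.sum_sub_distrib, hs1, hs2]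
  obtain ⟨k1, ⟨t, ht⟩, k3, k4⟩ := hPru (P - Pr P) hu0 hne P hP
  have hmem : ∃ t : ℝ, ∀ z, Pr P z - P z = t * (P - Pr P) z :=
    ⟨-1, fun z => by simp⟩
  have hmu : μ (Pru (P - Pr P) P) = μ P := by
    funext i
    have e : ∑ z, (P - Pr P) z * f z i = 0 := by
      have := congrFun h2 i
      rw [hμ, hμ] at this
      simp [sub_mul, Finset.sum_sub_distrib, this]
    rw [hμ, hμ]
    have e2 : ∀ z, Pru (P - Pr P) P z * f z i = P z * f z i + t * ((P - Pr P) z * f z i) := by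
      intro z
      have := ht z
      have h : Pru (P - Pr P) P z = P z + t * (P - Pr P) z := by linarith
      rw [h]; ring
    rw [Finset.sum_congr rfl (fun z _ => e2 z), Finset.sum_add_distrib, ← Finset.mul_sum, e]
    ring
  have heq : Pru (P - Pr P) P = Pr P :=
    h4 _ k1 hmu (le_antisymm (k3 _ h1 hmem) (h3 _ k1 hmu))
  refine ⟨heq, ?_⟩
  rw [hPplus]
  refine ⟨hP, ?_⟩
  rw [heq]
  obtain ⟨z, hz⟩ := Function.ne_iff.mp hne
  refine Finset.sum_pos' (fun z _ => mul_self_nonneg (P z - Pr P z)) ⟨z, Finset.mem_univ z, ?_⟩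
  exact mul_self_pos.mpr hz
end

section
/- For every P ∈ 𝒫(Z) with u := P − Π_P ≠ 0, one has B̄(u) ≥ B(P,ℰ). -/
lemma aux_conv (b : ℝ → ℝ) (hc : ContinuousOn b (Set.Ici 0))
    (hs : StrictConvexOn ℝ (Set.Ioi 0) b) : ConvexOn ℝ (Set.Ici 0) b := by
  refine ⟨convex_Ici 0, ?_⟩
  intro x hx y hy s t hs0 ht0 hst
  have hx' : (0:ℝ) ≤ x := hx
  have hy' : (0:ℝ) ≤ y := hy
  have key : ∀ w : ℝ, 0 ≤ w → Filter.Tendsto (fun h => b (w + h)) (nhdsWithin 0 (Set.Ioi 0))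
      (nhds (b w)) := by
    intro w hw
    have h1 := hc w hw
    have h2 : Filter.Tendsto (fun h : ℝ => w + h) (nhdsWithin 0 (Set.Ioi 0))
        (nhdsWithin w (Set.Ici 0)) := by
      apply tendsto_nhdsWithin_of_tendsto_nhds_of_eventually_within
      · have : Filter.Tendsto (fun h : ℝ => w + h) (nhds 0) (nhds (w + 0)) :=
          (continuous_const.add continuous_id).tendsto 0
        rw [add_zero] at this
        exact this.mono_left nhdsWithin_le_nhds
      · filter_upwards [self_mem_nhdsWithin] with h hh
        have : (0:ℝ) < h := hh
        show (0:ℝ) ≤ w + h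
        linarith
    exact h1.tendsto.comp h2
  have hw : 0 ≤ s • x + t • y := by
    simp only [smul_eq_mul]; positivity
  refine le_of_tendsto_of_tendsto (key _ hw)
    (((key x hx').const_smul s).add ((key y hy').const_smul t)) ?_
  filter_upwards [self_mem_nhdsWithin] with h hh
  have hh' : (0:ℝ) < h := hh
  have := hs.convexOn.2 (x := x + h) (y := y + h) (show (0:ℝ) < x + h by linarith)
    (show (0:ℝ) < y + h by linarith) hs0 ht0 hst
  have e1 : s • (x + h) + t • (y + h) = s • x + t • y + h := by
    simp only [smul_eq_mul]
    linear_combination h * hst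
  rw [e1] at this
  exact this

lemma aux_lim_s14 (a b : ℝ) (h : ∀ t : ℝ, 0 < t → t ≤ 1 → 0 ≤ t * a + t ^ 2 * b) : 0 ≤ a := by
  by_contra ha
  push Not at ha
  have hb1 : 0 < |b| + 1 := by positivity
  by_cases hc : -a / (2 * (|b| + 1)) ≤ 1
  · have h0 : 0 < -a / (2 * (|b| + 1)) := by apply div_pos <;> linarith
    have := h _ h0 hc
    set t := -a / (2 * (|b| + 1)) with ht
    have h2 : t * (2 * (|b| + 1)) = -a := by rw [ht]; field_simp
    have h3 : 0 ≤ a + t * b := by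
      by_contra hh
      push Not at hh
      nlinarith
    have h4 : t * b ≤ t * |b| := mul_le_mul_of_nonneg_left (le_abs_self b) h0.le
    nlinarith
  · push Not at hc
    rw [lt_div_iff₀ (by linarith)] at hc
    have := h 1 one_pos le_rfl
    have := le_abs_self b
    have := abs_nonneg b
    linarith

/-- penalty argument -/
lemma aux_pen {Z : Type} [Fintype Z] {d : ℕ} (K : Set (Z → ℝ)) (hK : IsCompact K)
    (H : (Z → ℝ) → ℝ) (hc : ContinuousOn H K) (hv : ConvexOn ℝ K H)
    (f : Z → Fin d → ℝ) (P : Z → ℝ) (S : Z → ℝ) (hS : S ∈ K)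
    (hSP : ∀ i, ∑ z, S z * f z i = ∑ z, P z * f z i)
    (hmin : ∀ Q ∈ K, (∀ i, ∑ z, Q z * f z i = ∑ z, P z * f z i) → H S ≤ H Q)
    (ε : ℝ) (hε : 0 < ε) :
    ∃ θ : Fin d → ℝ, ∀ R ∈ K,
      H S - ε ≤ H R + ∑ i, θ i * (∑ z, P z * f z i - ∑ z, R z * f z i) := by
  set m : (Z → ℝ) → Fin d → ℝ := fun Q i => ∑ z, Q z * f z i - ∑ z, P z * f z i with hm
  set N : (Z → ℝ) → ℝ := fun Q => ∑ i, (m Q i) ^ 2 with hN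
  have hNc : Continuous N := by simp only [hN, hm]; fun_prop
  have hN0 : ∀ Q, 0 ≤ N Q := fun Q => Finset.sum_nonneg fun i _ => sq_nonneg _
  have hNS : N S = 0 := by simp [hN, hm, hSP]
  obtain ⟨Q0, hQ0, hQ0min⟩ := hK.exists_isMinOn ⟨S, hS⟩ hc
  have hQ0min' : ∀ Q ∈ K, H Q0 ≤ H Q := fun Q hQ => hQ0min hQ
  -- choose penalty
  obtain ⟨n, hn0, hn⟩ : ∃ n : ℝ, 0 ≤ n ∧ ∀ Q ∈ K, H Q + n * N Q ≤ H S → H S - ε ≤ H Q := by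
    set K' := K ∩ H ⁻¹' (Set.Iic (H S - ε)) with hK'
    have hK'c : IsCompact K' := by
      apply hK.of_isClosed_subset _ Set.inter_subset_left
      exact hc.preimage_isClosed_of_isClosed hK.isClosed isClosed_Iic
    rcases K'.eq_empty_or_nonempty with he | hne
    · refine ⟨0, le_rfl, fun Q hQ _ => ?_⟩
      by_contra hh
      push Not at hh
      have : Q ∈ K' := ⟨hQ, hh.le⟩
      rw [he] at this
      exact this
    · obtain ⟨Q1, hQ1, hQ1min⟩ := hK'c.exists_isMinOn hne hNc.continuousOn
      have hpos : 0 < N Q1 := by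
        rcases (hN0 Q1).lt_or_eq with h | h
        · exact h
        · exfalso
          have hz := (Finset.sum_eq_zero_iff_of_nonneg (fun i _ => sq_nonneg (m Q1 i))).1 h.symm
          have := hmin Q1 hQ1.1 (fun i => by
            have := hz i (Finset.mem_univ i)
            have := pow_eq_zero_iff (two_ne_zero) |>.1 this
            simp only [hm] at this
            linarith)
          have h2 : H Q1 ≤ H S - ε := hQ1.2
          linarith
      have hSS := hQ0min' S hS
      refine ⟨(H S - H Q0 + 1) / N Q1, div_nonneg (by linarith) hpos.le, fun Q hQ hle => ?_⟩
      by_contra hh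
      push Not at hh
      have h1 : N Q1 ≤ N Q := hQ1min (show Q ∈ K' from ⟨hQ, hh.le⟩)
      have h2 : (H S - H Q0 + 1) / N Q1 * N Q1 ≤ (H S - H Q0 + 1) / N Q1 * N Q :=
        mul_le_mul_of_nonneg_left h1 (div_nonneg (by linarith) hpos.le)
      rw [div_mul_cancel₀ _ hpos.ne'] at h2
      have := hQ0min' Q hQ
      linarith
  obtain ⟨Q, hQ, hQmin⟩ := hK.exists_isMinOn ⟨S, hS⟩
    (f := fun Q => H Q + n * N Q) (hc.add (continuous_const.mul hNc).continuousOn)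
  have hQmin' : ∀ R ∈ K, H Q + n * N Q ≤ H R + n * N R := fun R hR => hQmin hR
  have hQS := hn Q hQ (by have := hQmin' S hS; rw [hNS] at this; linarith)
  refine ⟨fun i => -2 * n * m Q i, fun R hR => ?_⟩
  set X := ∑ i, m Q i * (m R i - m Q i) with hX
  set Y := ∑ i, (m R i - m Q i) ^ 2 with hY
  have hfo : 0 ≤ (H R - H Q) + n * (2 * X) := by
    apply aux_lim_s14 _ (n * Y)
    intro t ht0 ht1
    have hcv := hv.2 hQ hR (show 0 ≤ 1 - t by linarith) ht0.le (by ring)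
    have hmem := hv.1 hQ hR (show 0 ≤ 1 - t by linarith) ht0.le (by ring)
    have h1 := hQmin' _ hmem
    have hmt : ∀ i, m ((1 - t) • Q + t • R) i = m Q i + t * (m R i - m Q i) := by
      intro i
      simp only [hm, Pi.add_apply, Pi.smul_apply, smul_eq_mul, add_mul, Finset.sum_add_distrib,
        mul_assoc, ← Finset.mul_sum]
      ring
    have hNt : N ((1 - t) • Q + t • R) = N Q + 2 * t * X + t ^ 2 * Y := by
      simp only [hN, hmt, hX, hY, Finset.mul_sum, ← Finset.sum_add_distrib]
      exact Finset.sum_congr rfl fun i _ => by ring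
    rw [hNt] at h1
    simp only [smul_eq_mul] at hcv
    nlinarith
  have hfin : ∑ i, (-2 * n * m Q i) * (∑ z, P z * f z i - ∑ z, R z * f z i)
      = n * (2 * X) + 2 * n * N Q := by
    simp only [hX, hN, Finset.mul_sum, ← Finset.sum_add_distrib]
    refine Finset.sum_congr rfl fun i _ => ?_
    have : ∑ z, P z * f z i - ∑ z, R z * f z i = - m R i := by simp only [hm]; ring
    rw [show (∑ z, P z * f z i - ∑ z, R z * f z i) = - m R i from this]
    ring
  have := mul_nonneg hn0 (hN0 Q)
  simp only [] at *
  rw [hfin]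
  linarith


theorem stmt_14 {Z : Type} [Fintype Z] [Nonempty Z] {d : ℕ}
    (β β' : Z → ℝ → ℝ)
    (hβc : ∀ z, ContinuousOn (β z) (Set.Ici 0))
    (hβsc : ∀ z, StrictConvexOn ℝ (Set.Ioi 0) (β z))
    (hβd : ∀ z x, 0 < x → HasDerivAt (β z) (β' z x) x)
    (hβ'bot : ∀ z, Filter.Tendsto (β' z) (nhdsWithin 0 (Set.Ioi 0)) Filter.atBot)
    (hβ'top : ∀ z, Filter.Tendsto (β' z) Filter.atTop Filter.atTop)
    (e : Z → ℝ → ℝ)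
    (he_pos : ∀ z r, 0 < e z r)
    (he_left : ∀ z r, β' z (e z r) = r)
    (he_right : ∀ z x, 0 < x → e z (β' z x) = x)
    (f : Z → Fin d → ℝ)
    (prob : Set (Z → ℝ))
    (hprob : prob = {P : Z → ℝ | (∀ z, 0 ≤ P z) ∧ (∑ z, P z) = 1})
    (μ : (Z → ℝ) → Fin d → ℝ)
    (hμ : ∀ P i, μ P i = ∑ z, P z * f z i)
    (H : (Z → ℝ) → ℝ)
    (hH : ∀ Q, H Q = ∑ z, β z (Q z))
    (Λ : (Fin d → ℝ) → ℝ)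
    (hΛ : ∀ θ, (∑ z, e z ((∑ i, θ i * f z i) - Λ θ)) = 1)
    (Pθ : (Fin d → ℝ) → Z → ℝ)
    (hPθ : ∀ θ z, Pθ θ z = e z ((∑ i, θ i * f z i) - Λ θ))
    (Bdiv : (Z → ℝ) → (Z → ℝ) → ℝ)
    (hBdiv : ∀ P Q, Bdiv P Q = ∑ z, (β z (P z) - β z (Q z) - β' z (Q z) * (P z - Q z)))
    (BE : (Z → ℝ) → ℝ)
    (hBE : ∀ P, BE P = ⨅ θ, Bdiv P (Pθ θ))
    (Pr : (Z → ℝ) → Z → ℝ)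
    (hPr : ∀ P ∈ prob, Pr P ∈ prob ∧ μ (Pr P) = μ P ∧
      (∀ Q ∈ prob, μ Q = μ P → H (Pr P) ≤ H Q) ∧
      (∀ Q ∈ prob, μ Q = μ P → H Q = H (Pr P) → Q = Pr P))
    (Pru : (Z → ℝ) → (Z → ℝ) → Z → ℝ)
    (hPru : ∀ u : Z → ℝ, (∑ z, u z) = 0 → u ≠ 0 → ∀ Q ∈ prob,
      Pru u Q ∈ prob ∧ (∃ t : ℝ, ∀ z, Pru u Q z - Q z = t * u z) ∧
      (∀ R ∈ prob, (∃ t : ℝ, ∀ z, R z - Q z = t * u z) → H (Pru u Q) ≤ H R) ∧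
      (∀ R ∈ prob, (∃ t : ℝ, ∀ z, R z - Q z = t * u z) → H R = H (Pru u Q) → R = Pru u Q))
    (Pplus : (Z → ℝ) → Set (Z → ℝ))
    (hPplus : ∀ u, Pplus u = {Q | Q ∈ prob ∧ 0 < ∑ z, (Q z - Pru u Q z) * u z})
    (Bu : (Z → ℝ) → (Z → ℝ) → ℝ)
    (hBu : ∀ u Q, Bu u Q = H Q - H (Pru u Q))
    (Bbar : (Z → ℝ) → ℝ)
    (hBbar : ∀ u, Bbar u = sSup (Bu u '' closure (Pplus u)))
    (P : Z → ℝ) (hP : P ∈ prob)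
    (hne : P - Pr P ≠ 0) :
    BE P ≤ Bbar (P - Pr P) := by
  subst hprob
  have hKeq : {P : Z → ℝ | (∀ z, 0 ≤ P z) ∧ (∑ z, P z) = 1} = stdSimplex ℝ Z := rfl
  rw [hKeq] at *
  have hKc : IsCompact (stdSimplex ℝ Z) := isCompact_stdSimplex ℝ Z
  have hHc : ContinuousOn H (stdSimplex ℝ Z) := by
    have : H = fun Q => ∑ z, β z (Q z) := funext hH
    rw [this]
    refine continuousOn_finsetSum _ fun z _ => ?_
    exact (hβc z).comp (continuous_apply z).continuousOn (fun Q hQ => hQ.1 z)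
  have hHv : ConvexOn ℝ (stdSimplex ℝ Z) H := by
    refine ⟨convex_stdSimplex ℝ Z, ?_⟩
    intro x hx y hy a b ha hb hab
    simp only [hH, smul_eq_mul, Finset.mul_sum, ← Finset.sum_add_distrib]
    refine Finset.sum_le_sum fun z _ => ?_
    exact (aux_conv (β z) (hβc z) (hβsc z)).2 (hx.1 z) (hy.1 z) ha hb hab
  obtain ⟨hS, hSμ, hSmin, hSuniq⟩ := hPr P hP
  set S := Pr P with hSdef
  set u := P - S with hu
  have husum : ∑ z, u z = 0 := by
    simp only [hu, Pi.sub_apply, Finset.sum_sub_distrib]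
    rw [hP.2, hS.2]; ring
  have hSμ' : ∀ i, ∑ z, S z * f z i = ∑ z, P z * f z i := by
    intro i; rw [← hμ, ← hμ, hSμ]
  obtain ⟨hT, ⟨t, ht⟩, hTmin, hTuniq⟩ := hPru u husum hne P hP
  have hTμ : μ (Pru u P) = μ P := by
    funext i
    rw [hμ, hμ]
    have : ∀ z, Pru u P z * f z i = P z * f z i + t * (P z * f z i - S z * f z i) := by
      intro z
      have := ht z
      simp only [hu, Pi.sub_apply] at this ⊢
      linear_combination f z i * this
    simp only [this, Finset.sum_add_distrib, ← Finset.mul_sum, Finset.sum_sub_distrib, hSμ' i]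
    ring
  have hline : ∃ t : ℝ, ∀ z, S z - P z = t * u z := ⟨-1, fun z => by simp [hu]⟩
  have hTS : Pru u P = S :=
    hSuniq _ hT hTμ (le_antisymm (hTmin S hS hline) (hSmin _ hT hTμ))
  have hBuP : Bu u P = H P - H S := by rw [hBu, hTS]
  have hPplusP : P ∈ Pplus u := by
    rw [hPplus]
    refine ⟨hP, ?_⟩
    rw [hTS]
    obtain ⟨z, hz⟩ := Function.ne_iff.1 hne
    refine Finset.sum_pos' (fun z _ => mul_self_nonneg (u z)) ⟨z, Finset.mem_univ z, ?_⟩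
    exact mul_self_pos.2 hz
  have hsub : closure (Pplus u) ⊆ stdSimplex ℝ Z := by
    apply closure_minimal _ hKc.isClosed
    rw [hPplus]
    exact fun Q hQ => hQ.1
  obtain ⟨C, hC⟩ := hKc.exists_bound_of_continuousOn hHc
  have hbdd : BddAbove (Bu u '' closure (Pplus u)) := by
    refine ⟨C + C, ?_⟩
    rintro _ ⟨Q, hQ, rfl⟩
    have h1 := abs_le.1 (hC Q (hsub hQ))
    have h2 := abs_le.1 (hC _ (hPru u husum hne Q (hsub hQ)).1)
    rw [hBu]
    linarith [h1.2, h2.1]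
  have hBb : H P - H S ≤ Bbar u := by
    rw [hBbar, ← hBuP]
    exact le_csSup hbdd ⟨P, subset_closure hPplusP, rfl⟩
  refine le_trans ?_ hBb
  rw [hBE]
  by_cases hbb : BddBelow (Set.range fun θ => Bdiv P (Pθ θ))
  swap
  · rw [Real.iInf_of_not_bddBelow hbb]
    have := hSmin P hP rfl
    linarith
  refine le_of_forall_pos_le_add fun ε hε => ?_
  obtain ⟨θ, hθ⟩ := aux_pen (stdSimplex ℝ Z) hKc H hHc hHv f P S hS hSμ'
    (fun Q hQ h => hSmin Q hQ (by funext i; rw [hμ, hμ, h])) ε hε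
  refine (ciInf_le hbb θ).trans ?_
  have hmem : Pθ θ ∈ stdSimplex ℝ Z := by
    refine ⟨fun z => ?_, ?_⟩
    · rw [hPθ]; exact (he_pos _ _).le
    · simp only [hPθ]; exact hΛ θ
  have h1 := hθ _ hmem
  have h2 : Bdiv P (Pθ θ) = H P - H (Pθ θ)
      - ∑ i, θ i * (∑ z, P z * f z i - ∑ z, Pθ θ z * f z i) := by
    have h3 : ∀ z, β' z (Pθ θ z) = (∑ i, θ i * f z i) - Λ θ := by
      intro z; rw [hPθ, he_left]
    have h4 : ∑ i, θ i * (∑ z, P z * f z i - ∑ z, Pθ θ z * f z i)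
        = ∑ z, (∑ i, θ i * f z i) * (P z - Pθ θ z) := by
      simp only [← Finset.sum_sub_distrib, Finset.mul_sum, Finset.sum_mul]
      rw [Finset.sum_comm]
      exact Finset.sum_congr rfl fun z _ => Finset.sum_congr rfl fun i _ => by ring
    have h5 : ∑ z, Λ θ * (P z - Pθ θ z) = 0 := by
      rw [← Finset.mul_sum, Finset.sum_sub_distrib, hP.2, hmem.2]; ring
    rw [hBdiv, h4, hH, hH]
    simp only [h3, sub_mul, Finset.sum_sub_distrib, h5]
    ring
  rw [h2]
  linarith
end

section
/- If u ∈ N(f)\{0} is a global maximizer of B̄ over N(f)\{0} and P ∈ cl(𝒫_u^+) satisfies B_u(P) = B̄(u), then P is a global maximizer of Q ↦ B(Q,ℰ) over 𝒫(Z), and B(P,ℰ) = B̄(u). -/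
theorem aux_convex (b b' : ℝ → ℝ) (hc : ContinuousOn b (Set.Ici 0))
    (hs : StrictConvexOn ℝ (Set.Ioi 0) b) (hd : ∀ x, 0 < x → HasDerivAt b (b' x) x) :
    ConvexOn ℝ (Set.Ici 0) b := by
  have hdiff : DifferentiableOn ℝ b (Set.Ioi 0) := fun x hx =>
    (hd x hx).differentiableAt.differentiableWithinAt
  refine MonotoneOn.convexOn_of_deriv (convex_Ici 0) hc ?_ ?_
  · rw [interior_Ici]; exact hdiff
  · rw [interior_Ici]
    exact hs.convexOn.monotoneOn_deriv (fun x hx => (hd x hx).differentiableAt)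

theorem aux_tangent (b : ℝ → ℝ) (h : ConvexOn ℝ (Set.Ici 0) b) (x y c : ℝ)
    (hx : 0 ≤ x) (hy : 0 < y) (hd : HasDerivAt b c y) :
    0 ≤ b x - b y - c * (x - y) := by
  rcases lt_trichotomy x y with hxy | hxy | hxy
  · have := h.slope_le_of_hasDerivAt (x := x) (y := y) hx hy.le hxy hd
    rw [slope_def_field, div_le_iff₀ (by linarith)] at this
    linarith
  · subst hxy; simp
  · have := h.le_slope_of_hasDerivAt (x := y) (y := x) hy.le hx hxy hd
    rw [slope_def_field, le_div_iff₀ (by linarith)] at this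
    linarith

open scoped Pointwise in
theorem aux_sep {Z : Type} {d : ℕ} (K : Set (Z → ℝ)) (hK : IsCompact K) (hKc : Convex ℝ K)
    (H : (Z → ℝ) → ℝ) (hHc : ContinuousOn H K) (hH : ConvexOn ℝ K H)
    (L : (Z → ℝ) →ₗ[ℝ] (Fin d → ℝ)) (hL : Continuous L) (S : Z → ℝ) (hS : S ∈ K)
    (hmin : ∀ R ∈ K, L R = L S → H S ≤ H R) (ε : ℝ) (hε : 0 < ε) :
    ∃ θ : Fin d → ℝ, ∀ R ∈ K, H S - ε < H R + ∑ i, θ i * (L S i - L R i) := by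
  let C : Set ((Fin d → ℝ) × ℝ) := (fun R => (L R, H R)) '' K + (({0} : Set (Fin d → ℝ)) ×ˢ Set.Ici (0 : ℝ))
  have hmem : ∀ p : (Fin d → ℝ) × ℝ, p ∈ C ↔ ∃ R ∈ K, L R = p.1 ∧ H R ≤ p.2 := by
    rintro ⟨m, s⟩
    constructor
    · rintro ⟨_, ⟨R, hR, rfl⟩, ⟨a, b⟩, ⟨ha, hb⟩, hab⟩
      simp only [Set.mem_singleton_iff] at ha
      simp only [Set.mem_Ici] at hb
      subst ha
      simp only [Prod.mk_add_mk, add_zero, Prod.mk.injEq] at hab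
      exact ⟨R, hR, hab.1, by simp only; linarith⟩
    · rintro ⟨R, hR, h1, h2⟩
      refine ⟨_, ⟨R, hR, rfl⟩, (0, s - H R), ⟨rfl, ?_⟩, ?_⟩
      · simpa using h2
      · simpa using h1
  have hCc : IsClosed C := by
    refine IsClosed.add_left_of_isCompact (isClosed_singleton.prod isClosed_Ici) ?_
    exact hK.image_of_continuousOn (hL.continuousOn.prodMk hHc)
  have hCv : Convex ℝ C := by
    intro p hp q hq a b ha hb hab
    obtain ⟨R, hR, h1, h2⟩ := (hmem p).1 hp
    obtain ⟨T, hT, h3, h4⟩ := (hmem q).1 hq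
    refine (hmem _).2 ⟨a • R + b • T, hKc hR hT ha hb hab, ?_, ?_⟩
    · simp [h1, h3]
    · refine (hH.2 hR hT ha hb hab).trans ?_
      simp only [smul_eq_mul, Prod.snd_add, Prod.smul_snd]
      gcongr
  have hnot : ((L S, H S - ε) : (Fin d → ℝ) × ℝ) ∉ C := by
    intro h
    obtain ⟨R, hR, h1, h2⟩ := (hmem _).1 h
    have := hmin R hR h1
    simp only at h2
    linarith
  obtain ⟨g, w, hg1, hg2⟩ := geometric_hahn_banach_point_closed hCv hCc hnot
  set c := g (0, 1) with hc
  have hg : ∀ m s, g (m, s) = ∑ i, m i * g (Pi.single i 1, 0) + s * c := by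
    intro m s
    have e1 : ((m, s) : (Fin d → ℝ) × ℝ) = (∑ i, m i • (Pi.single i 1, 0)) + s • (0, 1) := by
      ext j
      · simp [Prod.fst_sum, Finset.sum_apply, Pi.single_apply]
      · simp [Prod.snd_sum]
    rw [e1]
    simp only [map_add, map_sum, map_smul, smul_eq_mul, hc]
  have hSC := hg2 (L S, H S) ((hmem _).2 ⟨S, hS, rfl, le_rfl⟩)
  rw [hg] at hg1 hSC
  have hcpos : 0 < c := by
    have : 0 < ε * c := by linarith
    exact (pos_iff_pos_of_mul_pos this).1 hε
  refine ⟨fun i => - g (Pi.single i 1, 0) / c, fun R hR => ?_⟩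
  have h := hg2 (L R, H R) ((hmem _).2 ⟨R, hR, rfl, le_rfl⟩)
  rw [hg] at h
  have h5 : c * ∑ i, (- g (Pi.single i 1, 0) / c) * (L S i - L R i)
      = ∑ i, L R i * g (Pi.single i 1, 0) - ∑ i, L S i * g (Pi.single i 1, 0) := by
    rw [Finset.mul_sum, ← Finset.sum_sub_distrib]
    refine Finset.sum_congr rfl fun i _ => ?_
    field_simp
    ring
  refine lt_of_mul_lt_mul_left (a := c) ?_ hcpos.le
  rw [mul_add, h5]
  linarith

theorem stmt_17 {Z : Type} [Fintype Z] [Nonempty Z] {d : ℕ}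
    (β β' : Z → ℝ → ℝ)
    (hβc : ∀ z, ContinuousOn (β z) (Set.Ici 0))
    (hβsc : ∀ z, StrictConvexOn ℝ (Set.Ioi 0) (β z))
    (hβd : ∀ z x, 0 < x → HasDerivAt (β z) (β' z x) x)
    (hβ'bot : ∀ z, Filter.Tendsto (β' z) (nhdsWithin 0 (Set.Ioi 0)) Filter.atBot)
    (hβ'top : ∀ z, Filter.Tendsto (β' z) Filter.atTop Filter.atTop)
    (e : Z → ℝ → ℝ)
    (he_pos : ∀ z r, 0 < e z r)
    (he_left : ∀ z r, β' z (e z r) = r)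
    (he_right : ∀ z x, 0 < x → e z (β' z x) = x)
    (f : Z → Fin d → ℝ)
    (prob : Set (Z → ℝ))
    (hprob : prob = {P : Z → ℝ | (∀ z, 0 ≤ P z) ∧ (∑ z, P z) = 1})
    (μ : (Z → ℝ) → Fin d → ℝ)
    (hμ : ∀ P i, μ P i = ∑ z, P z * f z i)
    (H : (Z → ℝ) → ℝ)
    (hH : ∀ Q, H Q = ∑ z, β z (Q z))
    (Λ : (Fin d → ℝ) → ℝ)
    (hΛ : ∀ θ, (∑ z, e z ((∑ i, θ i * f z i) - Λ θ)) = 1)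
    (Pθ : (Fin d → ℝ) → Z → ℝ)
    (hPθ : ∀ θ z, Pθ θ z = e z ((∑ i, θ i * f z i) - Λ θ))
    (Bdiv : (Z → ℝ) → (Z → ℝ) → ℝ)
    (hBdiv : ∀ P Q, Bdiv P Q = ∑ z, (β z (P z) - β z (Q z) - β' z (Q z) * (P z - Q z)))
    (BE : (Z → ℝ) → ℝ)
    (hBE : ∀ P, BE P = ⨅ θ, Bdiv P (Pθ θ))
    (Pr : (Z → ℝ) → Z → ℝ)
    (hPr : ∀ P ∈ prob, Pr P ∈ prob ∧ μ (Pr P) = μ P ∧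
      (∀ Q ∈ prob, μ Q = μ P → H (Pr P) ≤ H Q) ∧
      (∀ Q ∈ prob, μ Q = μ P → H Q = H (Pr P) → Q = Pr P))
    (Pru : (Z → ℝ) → (Z → ℝ) → Z → ℝ)
    (hPru : ∀ u : Z → ℝ, (∑ z, u z) = 0 → u ≠ 0 → ∀ Q ∈ prob,
      Pru u Q ∈ prob ∧ (∃ t : ℝ, ∀ z, Pru u Q z - Q z = t * u z) ∧
      (∀ R ∈ prob, (∃ t : ℝ, ∀ z, R z - Q z = t * u z) → H (Pru u Q) ≤ H R) ∧
      (∀ R ∈ prob, (∃ t : ℝ, ∀ z, R z - Q z = t * u z) → H R = H (Pru u Q) → R = Pru u Q))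
    (Pplus : (Z → ℝ) → Set (Z → ℝ))
    (hPplus : ∀ u, Pplus u = {Q | Q ∈ prob ∧ 0 < ∑ z, (Q z - Pru u Q z) * u z})
    (Bu : (Z → ℝ) → (Z → ℝ) → ℝ)
    (hBu : ∀ u Q, Bu u Q = H Q - H (Pru u Q))
    (Bbar : (Z → ℝ) → ℝ)
    (hBbar : ∀ u, Bbar u = sSup (Bu u '' closure (Pplus u)))
    (N : Set (Z → ℝ))
    (hNdef : N = {w : Z → ℝ | (∑ z, w z) = 0 ∧ ∀ i, (∑ z, w z * f z i) = 0})
    (u : Z → ℝ) (hu : u ∈ N \ {0})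
    (humax : ∀ v ∈ N \ {0}, Bbar v ≤ Bbar u)
    (P : Z → ℝ) (hPcl : P ∈ closure (Pplus u))
    (hPmax : Bu u P = Bbar u) :
    P ∈ prob ∧ (∀ Q ∈ prob, BE Q ≤ BE P) ∧ BE P = Bbar u := by
  have hconv : ∀ z, ConvexOn ℝ (Set.Ici 0) (β z) := fun z =>
    aux_convex (β z) (β' z) (hβc z) (hβsc z) (hβd z)
  have hps : prob = stdSimplex ℝ Z := by rw [hprob]; rfl
  have hKc : IsCompact prob := by rw [hps]; exact isCompact_stdSimplex ℝ Z
  have hKv : Convex ℝ prob := by rw [hps]; exact convex_stdSimplex ℝ Z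
  have hnn : ∀ Q ∈ prob, ∀ z, 0 ≤ Q z := by
    intro Q hQ; rw [hprob] at hQ; exact hQ.1
  have hone : ∀ Q ∈ prob, ∑ z, Q z = 1 := by
    intro Q hQ; rw [hprob] at hQ; exact hQ.2
  have hHe : H = fun Q => ∑ z, β z (Q z) := funext hH
  have hHcont : ContinuousOn H prob := by
    rw [hHe]
    refine continuousOn_finsetSum _ fun z _ => ?_
    exact (hβc z).comp (continuous_apply z).continuousOn (fun Q hQ => hnn Q hQ z)
  have hHconv : ConvexOn ℝ prob H := by
    refine ⟨hKv, fun Q hQ R hR a b ha hb hab => ?_⟩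
    rw [hH, hH, hH, Finset.smul_sum, Finset.smul_sum, ← Finset.sum_add_distrib]
    exact Finset.sum_le_sum fun z _ => (hconv z).2 (hnn Q hQ z) (hnn R hR z) ha hb hab
  have hPθpos : ∀ θ z, 0 < Pθ θ z := fun θ z => by rw [hPθ]; exact he_pos _ _
  have hPθmem : ∀ θ, Pθ θ ∈ prob := by
    intro θ
    rw [hprob]
    refine ⟨fun z => (hPθpos θ z).le, ?_⟩
    simp only [hPθ]; exact hΛ θ
  have hBnn : ∀ Q ∈ prob, ∀ θ, 0 ≤ Bdiv Q (Pθ θ) := by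
    intro Q hQ θ
    rw [hBdiv]
    exact Finset.sum_nonneg fun z _ => aux_tangent (β z) (hconv z) _ _ _ (hnn Q hQ z)
      (hPθpos θ z) (hβd z _ (hPθpos θ z))
  have hF : ∀ Q ∈ prob, ∀ θ, Bdiv Q (Pθ θ)
      = H Q - H (Pθ θ) - ∑ i, θ i * (μ Q i - μ (Pθ θ) i) := by
    intro Q hQ θ
    have h1 : ∀ z, β' z (Pθ θ z) = (∑ i, θ i * f z i) - Λ θ := by
      intro z; rw [hPθ, he_left]
    have h2 : ∑ z, β' z (Pθ θ z) * (Q z - Pθ θ z)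
        = ∑ i, θ i * (μ Q i - μ (Pθ θ) i) := by
      have h3 : ∑ z, β' z (Pθ θ z) * (Q z - Pθ θ z)
          = ∑ z, (∑ i, θ i * f z i) * (Q z - Pθ θ z) - Λ θ * (∑ z, Q z - ∑ z, Pθ θ z) := by
        rw [← Finset.sum_sub_distrib, Finset.mul_sum, ← Finset.sum_sub_distrib]
        refine Finset.sum_congr rfl fun z _ => ?_
        rw [h1]; ring
      rw [h3, hone Q hQ, hone _ (hPθmem θ), sub_self, mul_zero, sub_zero]
      simp only [hμ, Finset.sum_mul]
      rw [Finset.sum_comm]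
      refine Finset.sum_congr rfl fun i _ => ?_
      rw [← Finset.sum_sub_distrib, Finset.mul_sum]
      refine Finset.sum_congr rfl fun z _ => ?_
      ring
    rw [hBdiv, Finset.sum_sub_distrib, Finset.sum_sub_distrib, h2, hH, hH]
  let L : (Z → ℝ) →ₗ[ℝ] (Fin d → ℝ) :=
    { toFun := μ
      map_add' := by
        intro x y; ext i
        simp [hμ, add_mul, Finset.sum_add_distrib]
      map_smul' := by
        intro a x; ext i
        simp [hμ, Finset.mul_sum, mul_assoc] }
  have hL : Continuous L := L.continuous_of_finiteDimensional
  have hBEeq : ∀ Q ∈ prob, BE Q = H Q - H (Pr Q) := by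
    intro Q hQ
    obtain ⟨hp1, hp2, hp3, -⟩ := hPr Q hQ
    have hlow : ∀ θ, H Q - H (Pr Q) ≤ Bdiv Q (Pθ θ) := by
      intro θ
      have h1 := hF Q hQ θ
      have h2 := hF (Pr Q) hp1 θ
      have h3 := hBnn (Pr Q) hp1 θ
      rw [hp2] at h2
      linarith
    rw [hBE]
    apply le_antisymm
    · refine le_of_forall_pos_le_add fun ε hε => ?_
      obtain ⟨θ, hθ⟩ := aux_sep prob hKc hKv H hHcont hHconv L hL (Pr Q) hp1
        (fun R hR h => hp3 R hR (h.trans hp2)) ε hε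
      have h1 : H (Pr Q) - ε < H (Pθ θ) + ∑ i, θ i * (μ (Pr Q) i - μ (Pθ θ) i) :=
        hθ (Pθ θ) (hPθmem θ)
      rw [hp2] at h1
      have h2 := hF Q hQ θ
      have h3 : ⨅ θ, Bdiv Q (Pθ θ) ≤ Bdiv Q (Pθ θ) :=
        ciInf_le ⟨H Q - H (Pr Q), by rintro _ ⟨θ, rfl⟩; exact hlow θ⟩ θ
      linarith
    · exact le_ciInf hlow
  have hclsub : ∀ v, closure (Pplus v) ⊆ prob := by
    intro v
    refine closure_minimal ?_ hKc.isClosed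
    rw [hPplus]; exact fun Q hQ => hQ.1
  have hP : P ∈ prob := hclsub u hPcl
  rw [hNdef] at hu humax
  obtain ⟨⟨hu1, hu2⟩, hu3⟩ := hu
  have hu0 : u ≠ 0 := hu3
  obtain ⟨hq1, ⟨t, hq2⟩, hq3, -⟩ := hPru u hu1 hu0 P hP
  have hlowP : Bu u P ≤ BE P := by
    rw [hBEeq P hP, hBu]
    have : H (Pr P) ≤ H (Pru u P) := by
      refine (hPr P hP).2.2.1 _ hq1 ?_
      ext i
      have h1 : ∀ z, Pru u P z = P z + t * u z := fun z => by linarith [hq2 z]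
      simp only [hμ, h1, add_mul, Finset.sum_add_distrib, mul_assoc]
      rw [← Finset.mul_sum, hu2 i]; simp
    linarith
  have hBu0 : 0 ≤ Bu u P := by
    rw [hBu]
    have := hq3 P hP ⟨0, by simp⟩
    linarith
  obtain ⟨M, hM⟩ := (hKc.image_of_continuousOn hHcont).bddAbove
  obtain ⟨m, hm⟩ := (hKc.image_of_continuousOn hHcont).bddBelow
  have hup : ∀ Q ∈ prob, BE Q ≤ Bbar u := by
    intro Q hQ
    rw [hBEeq Q hQ]
    obtain ⟨hp1, hp2, hp3, hp4⟩ := hPr Q hQ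
    by_cases hne : Q - Pr Q = 0
    · have : Q = Pr Q := sub_eq_zero.1 hne
      rw [← this, sub_self, ← hPmax]; exact hBu0
    · set v := Q - Pr Q with hv
      have hv1 : ∑ z, v z = 0 := by
        simp [hv, Finset.sum_sub_distrib, hone Q hQ, hone _ hp1]
      have hv2 : ∀ i, ∑ z, v z * f z i = 0 := by
        intro i
        have := congrFun hp2 i
        rw [hμ, hμ] at this
        simp [hv, sub_mul, Finset.sum_sub_distrib, this]
      refine le_trans ?_ (humax v ⟨⟨hv1, hv2⟩, hne⟩)
      obtain ⟨hr1, ⟨s, hr2⟩, hr3, -⟩ := hPru v hv1 hne Q hQ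
      have hPe : Pru v Q = Pr Q := by
        have hμe : μ (Pru v Q) = μ Q := by
          ext i
          have h1 : ∀ z, Pru v Q z = Q z + s * v z := fun z => by linarith [hr2 z]
          simp only [hμ, h1, add_mul, Finset.sum_add_distrib, mul_assoc]
          rw [← Finset.mul_sum, hv2 i]; simp
        refine hp4 _ hr1 hμe (le_antisymm ?_ (hp3 _ hr1 hμe))
        exact hr3 _ hp1 ⟨-1, fun z => by simp [hv]⟩
      have hmemQ : Q ∈ Pplus v := by
        rw [hPplus]
        refine ⟨hQ, ?_⟩
        rw [hPe]
        have h0 : ∃ z, v z ≠ 0 := Function.ne_iff.1 hne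
        obtain ⟨z, hz⟩ := h0
        refine Finset.sum_pos' (fun z _ => mul_self_nonneg (v z)) ⟨z, Finset.mem_univ z, ?_⟩
        exact mul_self_pos.2 hz
      rw [hBbar]
      refine le_csSup ⟨M - m, ?_⟩ ⟨Q, subset_closure hmemQ, ?_⟩
      · rintro _ ⟨R, hR, rfl⟩
        have hR' := hclsub v hR
        rw [hBu]
        have h1 := hM ⟨R, hR', rfl⟩
        have h2 := hm ⟨_, (hPru v hv1 hne R hR').1, rfl⟩
        linarith
      · rw [hBu, hPe]
  have hfin : BE P = Bbar u := le_antisymm (hup P hP) (hPmax ▸ hlowP)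
  exact ⟨hP, fun Q hQ => hfin ▸ hup Q hQ, hfin⟩
end
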